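/- There exist constants c, c' ≥ 1 such that for every n-vertex undirected graph G with nonnegative, polynomially bounded edge weights, every ε ∈ (0,1), every integer k with 1 ≤ k ≤ log log n, and every set P ⊆ V×V of p pairs, there exists a subgraph Ĝ ⊆ G with |E(Ĝ)| ≤ n^{1+1/(2^{k+1}−1)}·(c·k/ε)^{2k}·(log n)^{c'} + p·(c·k/ε)^k edges such that dist_{Ĝ}(u,v) ≤ (1+ε')·dist_G(u,v) for every (u,v) ∈ P, where ε' ≤ c·ε·2^k·(log log n − k + 1). -/

import Mathlib

/-!
The subgraph is built in rounds. A round works with a hierarchy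
`A 0 = V, A 1, …, A (j + 1) = ∅` of vertex sets in the style of Thorup and Zwick. The bunch of a
vertex at level `i` is the set of vertices of `A i` that are strictly closer to it than `A (i + 1)`.
Choosing `A (i + 1)` as a greedy
hitting set (`exists_next_level`) keeps all bunches of size at most `b i`, while `A (i + 1)` is
smaller than `A i` by the factor `b i / O(log n)`. Two kinds of levels occur.

* Exact levels (`exact_level`): for every vertex of `V`, the distances to its bunch and to its
  nearest vertex of `A (i + 1)` are preserved by unions of shortest-path trees with `n * (b + 1)`
  edges. Such a level fits in the edge budget as long as `b` is about `D`.
* Pair levels (`pair_level`): the bunch and pivot pairs of the vertices of `A i` are put into a set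
  `H` of pairs whose distances have to be preserved by later rounds. Here `b` may be squared from
  one level to the next, so that `k + 1` levels suffice to go down from `n / D ^ e` vertices to
  none.

The hop bound (`hierarchy_conn`) is proved by cutting a shortest path into `m` segments at every
level. Either all segments are well connected, or the first and the last bad segment are close to
the next level, and the detour through it costs only `O(1 / m)` of the length. So every pair is
joined with stretch `1 + 8 j / m` by a path consisting of preserved pieces and at most
`(m + 1) ^ j` edges of `G`, and a set `P` of pairs is served by adding `|P| * (m + 1) ^ j` edges
and a preserver for the pairs in `H` (`round_conn`, `round_compose`).

The first round uses a single exact level and `j = k`, which gives the term `p * (c k / ε) ^ k`. It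
leaves about `n ^ (1 + 1 / (2 ^ (k + 1) - 1)) / (c k / ε) ^ (2 k)` pairs, which a second round with
`j = 4 k` can afford. From then on (`late_rounds`) the number of levels affordable to the pairs left
over grows by a factor at least `3 / 2` per round, until about `2 ^ (k + 1)` exact levels suffice to
leave no pairs at all. The stretches of the late rounds therefore multiply to
`exp (O(2 ^ k / m)) = 1 + O(ε 2 ^ k)`. In the late rounds `m` is about `2 ^ k + 1 / ε`; then
`(m + 1) ^ (2 k)` is at most `D = n ^ (1 / (2 ^ (k + 1) - 1)) * (O(k / ε)) ^ (2 k)` once `log log n`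
exceeds a constant (`late_base_le`). For smaller `n` the whole graph `G` has at most
`n ^ 2 ≤ (log n) ^ c'` edges and serves as the preserver. The resulting stretch `1 + O(ε 2 ^ k)`
has no factor `log log n - k + 1`, which is at least `1`.
-/

open scoped ENNReal

namespace Hopsets

/-- A weighted directed graph on vertex type `V`: a finite edge set together
with a weight function. -/
structure WDigraph (V : Type) where
  edges : Finset (V × V)
  w : V × V → ℝ

variable {V : Type}

/-- All edge weights are nonnegative. -/
def WDigraph.Nonneg (G : WDigraph V) : Prop := ∀ e, 0 ≤ G.w e

/-- Edge weights are polynomially bounded (degree `q`) in the number of vertices. -/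
def WDigraph.PolyBounded [Fintype V] (G : WDigraph V) (q : ℕ) : Prop :=
  ∀ e ∈ G.edges, G.w e ≤ (Fintype.card V : ℝ) ^ q

/-- `G` encodes an undirected graph: edges come in symmetric pairs of equal weight. -/
def WDigraph.Symmetric (G : WDigraph V) : Prop :=
  ∀ e ∈ G.edges, (e.2, e.1) ∈ G.edges ∧ G.w (e.2, e.1) = G.w e

/-- `G` is unweighted: every edge has weight `1`. -/
def WDigraph.Unweighted (G : WDigraph V) : Prop := ∀ e, G.w e = 1

/-- `IsWalkFrom G u v l` : the list of edges `l` forms a walk from `u` to `v` in `G`. -/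
def IsWalkFrom (G : WDigraph V) : V → V → List (V × V) → Prop
  | u, v, [] => u = v
  | u, v, e :: l => e ∈ G.edges ∧ e.1 = u ∧ IsWalkFrom G e.2 v l

/-- The total weight of a walk, as an extended nonnegative real. -/
noncomputable def walkWeight (G : WDigraph V) (l : List (V × V)) : ℝ≥0∞ :=
  ENNReal.ofReal ((l.map G.w).sum)

/-- `β`-hop-bounded distance: the infimum weight of a `u`-`v` walk with at most `β` edges. -/
noncomputable def WDigraph.hopDist (G : WDigraph V) (β : ℕ) (u v : V) : ℝ≥0∞ :=
  ⨅ l ∈ {l : List (V × V) | IsWalkFrom G u v l ∧ l.length ≤ β}, walkWeight G l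

/-- Distance: infimum weight of a `u`-`v` walk (`∞` if there is none). -/
noncomputable def WDigraph.dist (G : WDigraph V) (u v : V) : ℝ≥0∞ :=
  ⨅ l ∈ {l : List (V × V) | IsWalkFrom G u v l}, walkWeight G l

/-- `v` is reachable from `u` in `G`. -/
def WDigraph.Reachable (G : WDigraph V) (u v : V) : Prop :=
  ∃ l, IsWalkFrom G u v l

/-- The graph `G ∪ H` obtained by adding the edge set `H`, each added edge `(x,y)`
weighted by `dist_G(x,y)`. -/
noncomputable def WDigraph.augment [DecidableEq V] (G : WDigraph V) (H : Finset (V × V)) :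
    WDigraph V where
  edges := G.edges ∪ H
  w := fun e => if e ∈ H then (G.dist e.1 e.2).toReal else G.w e

/-- `H` is a `(β,ε)`-hopset for `G`:
`dist_G(u,v) ≤ dist^{(β)}_{G∪H}(u,v) ≤ (1+ε)·dist_G(u,v)` for all `u, v`. -/
def IsHopset [DecidableEq V] (G : WDigraph V) (β : ℕ) (ε : ℝ) (H : Finset (V × V)) : Prop :=
  ∀ u v, G.dist u v ≤ (G.augment H).hopDist β u v ∧
    (G.augment H).hopDist β u v ≤ ENNReal.ofReal (1 + ε) * G.dist u v

/-- The subgraph of `G` with edge set `E'` (same weights). -/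
def WDigraph.sub (G : WDigraph V) (E' : Finset (V × V)) : WDigraph V :=
  ⟨E', G.w⟩

/-- `E'` (a subgraph of `G`) is an `r`-missing `t`-spanner: for every reachable pair
`(u,v)` there is a `u`-`v` walk in `G` of weight at most `t·dist_G(u,v)` with at most
`r` edges outside `E'`. -/
def IsMissingSpanner [DecidableEq V] (G : WDigraph V) (E' : Finset (V × V))
    (r : ℕ) (t : ℝ) : Prop :=
  ∀ u v, G.Reachable u v → ∃ l, IsWalkFrom G u v l ∧
    walkWeight G l ≤ ENNReal.ofReal t * G.dist u v ∧
    (l.filter (fun e => decide (e ∉ E'))).length ≤ r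


/-! ### Walks and distances -/

section Basic

variable {G : WDigraph V}

lemma isWalkFrom_append {u v x : V} {l₁ l₂ : List (V × V)}
    (h₁ : IsWalkFrom G u v l₁) (h₂ : IsWalkFrom G v x l₂) : IsWalkFrom G u x (l₁ ++ l₂) := by
  induction l₁ generalizing u with
  | nil => cases h₁; simpa using h₂
  | cons e l ih => exact ⟨h₁.1, h₁.2.1, ih h₁.2.2⟩

lemma isWalkFrom_append_iff {u x : V} {l₁ l₂ : List (V × V)} :
    IsWalkFrom G u x (l₁ ++ l₂) ↔ ∃ v, IsWalkFrom G u v l₁ ∧ IsWalkFrom G v x l₂ := by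
  refine ⟨fun h => ?_, fun ⟨v, h₁, h₂⟩ => isWalkFrom_append h₁ h₂⟩
  induction l₁ generalizing u with
  | nil => exact ⟨u, rfl, h⟩
  | cons e l ih =>
    obtain ⟨v, h₁, h₂⟩ := ih h.2.2
    exact ⟨v, ⟨h.1, h.2.1, h₁⟩, h₂⟩

lemma sum_nonneg_of_nonneg (hn : G.Nonneg) (l : List (V × V)) : 0 ≤ (l.map G.w).sum := by
  apply List.sum_nonneg
  intro a ha
  obtain ⟨e, -, rfl⟩ := List.mem_map.1 ha
  exact hn e

lemma walkWeight_append (hn : G.Nonneg) (l₁ l₂ : List (V × V)) :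
    walkWeight G (l₁ ++ l₂) = walkWeight G l₁ + walkWeight G l₂ := by
  simp only [walkWeight, List.map_append, List.sum_append]
  exact ENNReal.ofReal_add (sum_nonneg_of_nonneg hn _) (sum_nonneg_of_nonneg hn _)

lemma walkWeight_cons (hn : G.Nonneg) (e : V × V) (l : List (V × V)) :
    walkWeight G (e :: l) = ENNReal.ofReal (G.w e) + walkWeight G l := by
  simp only [walkWeight, List.map_cons, List.sum_cons]
  exact ENNReal.ofReal_add (hn e) (sum_nonneg_of_nonneg hn _)

lemma dist_le_walkWeight {u v : V} {l : List (V × V)} (h : IsWalkFrom G u v l) :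
    G.dist u v ≤ walkWeight G l := iInf₂_le l h

lemma dist_self' (u : V) : G.dist u u = 0 := by
  have : G.dist u u ≤ walkWeight G [] := dist_le_walkWeight (l := []) rfl
  simpa [walkWeight] using this

lemma dist_triangle' (hn : G.Nonneg) (u v x : V) : G.dist u x ≤ G.dist u v + G.dist v x := by
  unfold WDigraph.dist
  simp only [ENNReal.iInf_add, ENNReal.add_iInf]
  refine le_iInf₂ fun l₂ h₂ => le_iInf₂ fun l₁ h₁ => ?_
  rw [← walkWeight_append hn]
  exact iInf₂_le (l₁ ++ l₂) (isWalkFrom_append (v := v) h₁ h₂)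

lemma dist_edge {e : V × V} (he : e ∈ G.edges) :
    G.dist e.1 e.2 ≤ ENNReal.ofReal (G.w e) := by
  have : G.dist e.1 e.2 ≤ walkWeight G [e] :=
    dist_le_walkWeight (l := [e]) ⟨he, rfl, rfl⟩
  simpa [walkWeight] using this

lemma walk_reverse (hs : G.Symmetric) {u v : V} {l : List (V × V)} (h : IsWalkFrom G u v l) :
    ∃ l', IsWalkFrom G v u l' ∧ (l'.map G.w).sum = (l.map G.w).sum := by
  induction l generalizing u with
  | nil => cases h; exact ⟨[], rfl, rfl⟩
  | cons e l ih =>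
    obtain ⟨he, rfl, hl⟩ := h
    obtain ⟨l', h', hw⟩ := ih hl
    refine ⟨l' ++ [(e.2, e.1)], isWalkFrom_append h' ⟨(hs e he).1, rfl, rfl⟩, ?_⟩
    simp [hw, (hs e he).2, add_comm]

lemma dist_symm' (hs : G.Symmetric) (u v : V) : G.dist u v = G.dist v u := by
  have key : ∀ u v, G.dist u v ≤ G.dist v u := by
    intro u v
    refine le_iInf₂ fun l h => ?_
    obtain ⟨l', h', hw⟩ := walk_reverse hs h
    exact (dist_le_walkWeight h').trans (by simp [walkWeight, hw])
  exact le_antisymm (key u v) (key v u)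

lemma sub_nonneg' (hn : G.Nonneg) (E : Finset (V × V)) : (G.sub E).Nonneg := hn

lemma sub_symm' (hs : G.Symmetric) {E : Finset (V × V)} (hE : E ⊆ G.edges)
    (h : ∀ e ∈ E, (e.2, e.1) ∈ E) : (G.sub E).Symmetric :=
  fun e he => ⟨h e he, (hs e (hE he)).2⟩

lemma isWalkFrom_sub_mono {E E' : Finset (V × V)} (h : E ⊆ E') {u v : V} {l : List (V × V)}
    (hl : IsWalkFrom (G.sub E) u v l) : IsWalkFrom (G.sub E') u v l := by
  induction l generalizing u with
  | nil => exact hl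
  | cons e l ih => exact ⟨h hl.1, hl.2.1, ih hl.2.2⟩

lemma dist_sub_mono {E E' : Finset (V × V)} (h : E ⊆ E') (u v : V) :
    (G.sub E').dist u v ≤ (G.sub E).dist u v := by
  refine le_iInf₂ fun l hl => ?_
  exact dist_le_walkWeight (G := G.sub E') (isWalkFrom_sub_mono h hl)

/-- Every walk can be shortcut to one that never repeats a starting vertex. -/
lemma exists_nodup_walk (hn : G.Nonneg) {u v : V} {l : List (V × V)} (h : IsWalkFrom G u v l) :
    ∃ l', IsWalkFrom G u v l' ∧ walkWeight G l' ≤ walkWeight G l ∧ (l'.map Prod.fst).Nodup := by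
  induction l generalizing u with
  | nil => exact ⟨[], h, le_rfl, by simp⟩
  | cons e l ih =>
    obtain ⟨he, rfl, hl⟩ := h
    obtain ⟨l', h', hw, hd⟩ := ih hl
    by_cases hmem : e.1 ∈ l'.map Prod.fst
    · obtain ⟨f, hf, hfe⟩ := List.mem_map.1 hmem
      obtain ⟨s, t, rfl⟩ := List.append_of_mem hf
      obtain ⟨y, -, h₂⟩ := isWalkFrom_append_iff.1 h'
      have hy : f.1 = y := h₂.2.1
      refine ⟨f :: t, ⟨h₂.1, hfe, h₂.2.2⟩, ?_, ?_⟩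
      · rw [walkWeight_append hn] at hw
        rw [walkWeight_cons hn e]
        exact (le_add_self.trans hw).trans le_add_self
      · rw [List.map_append] at hd
        exact hd.of_append_right
    · refine ⟨e :: l', ⟨he, rfl, h'⟩, ?_, ?_⟩
      · rw [walkWeight_cons hn, walkWeight_cons hn]
        gcongr
      · rw [List.map_cons, List.nodup_cons]
        exact ⟨hmem, hd⟩

/-- The infimum defining a finite distance is attained. -/
lemma exists_walk_eq_dist [Fintype V] [DecidableEq V] (hn : G.Nonneg) {u v : V}
    (h : G.dist u v ≠ ⊤) : ∃ l, IsWalkFrom G u v l ∧ walkWeight G l = G.dist u v := by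
  classical
  let S : Set (List (V × V)) := {l | IsWalkFrom G u v l ∧ l.Nodup}
  have hfin : S.Finite := by
    have : ({l : List (V × V) | l.Nodup}).Finite :=
      Set.finite_coe_iff.1 (inferInstanceAs (Finite {l : List (V × V) // l.Nodup}))
    exact this.subset fun l hl => hl.2
  have hne : S.Nonempty := by
    by_contra hcon
    apply h
    unfold WDigraph.dist
    refine iInf₂_eq_top.2 fun l hl => ?_
    obtain ⟨l', h', -, hd⟩ := exists_nodup_walk hn hl
    exact absurd ⟨l', h', hd.of_map _⟩ hcon
  obtain ⟨l, hl, hmin⟩ := Set.exists_min_image S (walkWeight G) hfin hne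
  refine ⟨l, hl.1, le_antisymm (le_iInf₂ fun l₁ h₁ => ?_) (dist_le_walkWeight hl.1)⟩
  obtain ⟨l', h', hw, hd⟩ := exists_nodup_walk hn h₁
  exact (hmin l' ⟨h', hd.of_map _⟩).trans hw

end Basic

/-! ### Connections through a partially built subgraph -/

section Connections

/-- `Conn G F H h x y ℓ`: after buying at most `h` edges of `G`, every symmetric subgraph that
contains them and `F`, and that distorts the distances of the pairs in `H` by a factor at most
`s`, joins `x` to `y` by a path of weight at most `s * ℓ`. It plays the role of an
`x`-`y` walk of weight `ℓ` in `G ∪ F ∪ H` with at most `h` edges outside `F` and `H`. -/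
def Conn (G : WDigraph V) (F H : Finset (V × V)) (h : ℕ) (x y : V) (ℓ : ℝ≥0∞) : Prop :=
  ∃ E₁ ⊆ G.edges, E₁.card ≤ h ∧ ∀ E ⊆ G.edges, (∀ e ∈ E, (e.2, e.1) ∈ E) → F ⊆ E → E₁ ⊆ E →
    ∀ s : ℝ≥0∞, 1 ≤ s → (∀ p ∈ H, (G.sub E).dist p.1 p.2 ≤ s * G.dist p.1 p.2) →
      (G.sub E).dist x y ≤ s * ℓ

variable {G : WDigraph V} {F H : Finset (V × V)}

lemma Conn.mono {h h' : ℕ} {x y : V} {ℓ ℓ' : ℝ≥0∞} (c : Conn G F H h x y ℓ) (hh : h ≤ h')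
    (hl : ℓ ≤ ℓ') : Conn G F H h' x y ℓ' := by
  obtain ⟨E₁, h₁, h₂, h₃⟩ := c
  refine ⟨E₁, h₁, h₂.trans hh, fun E a b c d s hs hp => (h₃ E a b c d s hs hp).trans ?_⟩
  gcongr

lemma Conn.trans [DecidableEq V] (hn : G.Nonneg) {h₁ h₂ : ℕ} {x y z : V} {ℓ₁ ℓ₂ : ℝ≥0∞}
    (c₁ : Conn G F H h₁ x y ℓ₁) (c₂ : Conn G F H h₂ y z ℓ₂) :
    Conn G F H (h₁ + h₂) x z (ℓ₁ + ℓ₂) := by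
  obtain ⟨E₁, a₁, b₁, d₁⟩ := c₁
  obtain ⟨E₂, a₂, b₂, d₂⟩ := c₂
  refine ⟨E₁ ∪ E₂, Finset.union_subset a₁ a₂, (Finset.card_union_le _ _).trans (by omega),
    fun E hE hsym hF h12 s hs hp => ?_⟩
  rw [mul_add]
  refine (dist_triangle' (G := G.sub E) (sub_nonneg' hn E) x y z).trans (add_le_add ?_ ?_)
  · exact d₁ E hE hsym hF (Finset.union_subset_left h12) s hs hp
  · exact d₂ E hE hsym hF (Finset.union_subset_right h12) s hs hp

lemma Conn.symm (hs : G.Symmetric) {h : ℕ} {x y : V} {ℓ : ℝ≥0∞} (c : Conn G F H h x y ℓ) :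
    Conn G F H h y x ℓ := by
  obtain ⟨E₁, h₁, h₂, h₃⟩ := c
  refine ⟨E₁, h₁, h₂, fun E a b c d s hs' hp => ?_⟩
  rw [dist_symm' (sub_symm' hs a b)]
  exact h₃ E a b c d s hs' hp

lemma Conn.edge {e : V × V} (he : e ∈ G.edges) :
    Conn G F H 1 e.1 e.2 (ENNReal.ofReal (G.w e)) := by
  refine ⟨{e}, by simpa using he, by simp, fun E _ _ _ d s hs' _ => ?_⟩
  have : (G.sub E).dist e.1 e.2 ≤ ENNReal.ofReal (G.w e) :=
    dist_edge (G := G.sub E) (d (Finset.mem_singleton_self e))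
  exact this.trans (le_mul_of_one_le_left' hs')

lemma Conn.pair {x y : V} (h : (x, y) ∈ H) : Conn G F H 0 x y (G.dist x y) :=
  ⟨∅, by simp, by simp, fun _ _ _ _ _ _ _ hp => hp _ h⟩

lemma Conn.exact {x y : V} {ℓ : ℝ≥0∞}
    (h : ∀ E, F ⊆ E → (G.sub E).dist x y ≤ ℓ) : Conn G F H 0 x y ℓ :=
  ⟨∅, by simp, by simp, fun E _ _ hF _ _ hs _ =>
    (h E hF).trans (le_mul_of_one_le_left' hs)⟩

lemma Conn.dist_le (hs : G.Symmetric) (hF : F ⊆ G.edges) {h : ℕ} {x y : V} {ℓ : ℝ≥0∞}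
    (c : Conn G F H h x y ℓ) : G.dist x y ≤ ℓ := by
  obtain ⟨E₁, h₁, h₂, h₃⟩ := c
  have := h₃ G.edges subset_rfl (fun e he => (hs e he).1) hF h₁ 1 le_rfl
    (fun p _ => by rw [one_mul]; exact le_rfl)
  rw [one_mul] at this
  exact this

/-- The first edge at which the weight of a walk exceeds `θ`. -/
lemma exists_split (hn : G.Nonneg) (θ : ℝ≥0∞) (l : List (V × V)) (h : θ < walkWeight G l) :
    ∃ l₁ e l₂, l = l₁ ++ e :: l₂ ∧ walkWeight G l₁ ≤ θ ∧
      θ < walkWeight G l₁ + ENNReal.ofReal (G.w e) := by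
  induction l using List.reverseRecOn with
  | nil => simp [walkWeight] at h
  | append_singleton l e ih =>
    by_cases h' : θ < walkWeight G l
    · obtain ⟨l₁, f, l₂, rfl, h₁, h₂⟩ := ih h'
      exact ⟨l₁, f, l₂ ++ [e], by simp, h₁, h₂⟩
    · refine ⟨l, e, [], by simp, not_lt.1 h', ?_⟩
      rw [walkWeight_append hn, walkWeight_cons hn] at h
      simpa [walkWeight] using h

/-- One segment: either it is well connected, or both of its ends are close to `A`. -/
lemma segment_base (hs : G.Symmetric) {A : Finset V} {a θ : ℝ≥0∞} {h : ℕ}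
    (hP : ∀ x y, Conn G F H h x y (a * G.dist x y) ∨
      ∃ z ∈ A, Conn G F H h x z (2 * G.dist x y)) {x y : V} (hd : G.dist x y ≤ θ) :
    Conn G F H h x y (a * G.dist x y) ∨
      ∃ z ∈ A, ∃ z' ∈ A, Conn G F H h x z (2 * θ) ∧ Conn G F H h y z' (2 * θ) := by
  rcases hP x y with h₁ | ⟨z, hz, h₁⟩
  · exact Or.inl h₁
  rcases hP y x with h₂ | ⟨z', hz', h₂⟩
  · left
    rw [dist_symm' hs]
    exact h₂.symm hs
  · right
    refine ⟨z, hz, z', hz', h₁.mono le_rfl (by gcongr), h₂.mono le_rfl ?_⟩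
    rw [dist_symm' hs]
    gcongr

/-- Cutting a walk into at most `t + 1` segments of weight at most `θ`, joined by single edges:
either all segments are well connected, or the start `xl` of the first bad segment and the end `yr`
of the last one are close to `A`. The weights of the walk before `xl`, between `xl` and `yr`, and
after `yr` are `W₁`, `W₃` and `W₂`. -/
lemma segments [DecidableEq V] (hs : G.Symmetric) (hn : G.Nonneg) {A : Finset V} {a θ : ℝ≥0∞}
    (ha : 1 ≤ a) (hθ : θ ≠ ⊤) {h : ℕ}
    (hP : ∀ x y, Conn G F H h x y (a * G.dist x y) ∨
      ∃ z ∈ A, Conn G F H h x z (2 * G.dist x y)) (t : ℕ) :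
    ∀ (x y : V) (l : List (V × V)), IsWalkFrom G x y l → walkWeight G l ≤ (t + 1 : ℕ) * θ →
      Conn G F H ((t + 1) * h + t) x y (a * walkWeight G l) ∨
      ∃ xl yr, ∃ z ∈ A, ∃ z' ∈ A, ∃ h₁ h₂ : ℕ, ∃ W₁ W₂ W₃ : ℝ≥0∞,
        Conn G F H h₁ x xl (a * W₁) ∧ Conn G F H h xl z (2 * θ) ∧ G.dist x xl ≤ W₁ ∧
        G.dist xl yr ≤ W₃ ∧
        Conn G F H h yr z' (2 * θ) ∧ Conn G F H h₂ yr y (a * W₂) ∧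
        W₁ + W₃ + W₂ ≤ walkWeight G l ∧ h₁ + h₂ ≤ t * (h + 1) := by
  have refl0 : ∀ x, Conn G F H 0 x x (a * 0) := fun x => Conn.exact fun E _ => by
    rw [dist_self']; exact zero_le
  have small : ∀ t : ℕ, ∀ (x y : V) (l : List (V × V)), IsWalkFrom G x y l →
      walkWeight G l ≤ θ →
      Conn G F H ((t + 1) * h + t) x y (a * walkWeight G l) ∨
      ∃ xl yr, ∃ z ∈ A, ∃ z' ∈ A, ∃ h₁ h₂ : ℕ, ∃ W₁ W₂ W₃ : ℝ≥0∞,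
        Conn G F H h₁ x xl (a * W₁) ∧ Conn G F H h xl z (2 * θ) ∧ G.dist x xl ≤ W₁ ∧
        G.dist xl yr ≤ W₃ ∧
        Conn G F H h yr z' (2 * θ) ∧ Conn G F H h₂ yr y (a * W₂) ∧
        W₁ + W₃ + W₂ ≤ walkWeight G l ∧ h₁ + h₂ ≤ t * (h + 1) := by
    intro t x y l hl hw
    have hd := dist_le_walkWeight hl
    rcases segment_base hs hP (hd.trans hw) with hc | ⟨z, hz, z', hz', c₁, c₂⟩
    · left
      exact hc.mono (by nlinarith) (by gcongr)
    · right
      exact ⟨x, y, z, hz, z', hz', 0, 0, 0, 0, walkWeight G l, refl0 x, c₁, (dist_self' x).le, hd,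
        c₂, refl0 y, by simp, by simp⟩
  induction t with
  | zero =>
    intro x y l hl hw
    exact small 0 x y l hl (by simpa using hw)
  | succ t ih =>
    intro x y l hl hw
    by_cases hsm : walkWeight G l ≤ θ
    · exact small (t + 1) x y l hl hsm
    obtain ⟨l₁, e, l₂, rfl, hw₁, hwe⟩ := exists_split hn θ l (not_le.1 hsm)
    obtain ⟨y₁, hl₁, he, rfl, hl₂⟩ := isWalkFrom_append_iff.1 hl
    have hW : walkWeight G (l₁ ++ e :: l₂) =
        walkWeight G l₁ + ENNReal.ofReal (G.w e) + walkWeight G l₂ := by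
      rw [walkWeight_append hn, walkWeight_cons hn, add_assoc]
    have hw₂ : walkWeight G l₂ ≤ (t + 1 : ℕ) * θ := by
      have h1 : θ + walkWeight G l₂ ≤ θ + (t + 1 : ℕ) * θ := by
        calc θ + walkWeight G l₂ ≤ walkWeight G (l₁ ++ e :: l₂) := by rw [hW]; gcongr
          _ ≤ _ := hw
          _ = θ + (t + 1 : ℕ) * θ := by push_cast; ring
      exact (ENNReal.add_le_add_iff_left hθ).1 h1
    have hd₁ := dist_le_walkWeight hl₁
    have hce : Conn G F H 1 e.1 e.2 (ENNReal.ofReal (G.w e)) := Conn.edge he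
    have hea : ENNReal.ofReal (G.w e) ≤ a * ENNReal.ofReal (G.w e) := le_mul_of_one_le_left' ha
    have hxe : G.dist x e.2 ≤ walkWeight G l₁ + ENNReal.ofReal (G.w e) :=
      (dist_triangle' hn x e.1 e.2).trans (add_le_add hd₁ (dist_edge he))
    rw [hW]
    set p := walkWeight G l₁
    set w := ENNReal.ofReal (G.w e)
    set r := walkWeight G l₂
    rcases segment_base hs hP (hd₁.trans hw₁) with hc | ⟨z, hz, z', hz', c₁, c₂⟩
    · have hcp : Conn G F H (h + 1) x e.2 (a * (p + w)) :=
        (hc.trans hn hce).mono le_rfl (by rw [mul_add]; gcongr)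
      rcases ih e.2 y l₂ hl₂ hw₂ with hg | ⟨xl, yr, z, hz, z', hz', h₁, h₂, W₁, W₂, W₃, k₁, k₂,
        k₀, k₃, k₄, k₅, k₆, k₇⟩
      · left
        exact (hcp.trans hn hg).mono (by ring_nf; omega) (by rw [← mul_add])
      · right
        refine ⟨xl, yr, z, hz, z', hz', h + 1 + h₁, h₂, p + w + W₁, W₂, W₃, ?_, k₂, ?_, k₃, k₄,
          k₅, ?_, ?_⟩
        · rw [mul_add]; exact hcp.trans hn k₁
        · exact (dist_triangle' hn x e.2 xl).trans (add_le_add hxe k₀)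
        · calc p + w + W₁ + W₃ + W₂ = p + w + (W₁ + W₃ + W₂) := by ring
            _ ≤ _ := by gcongr
        · linarith
    · right
      rcases ih e.2 y l₂ hl₂ hw₂ with hg | ⟨xl, yr, y₁, hy₁, y₂, hy₂, h₁, h₂, W₁, W₂, W₃, k₁, k₂,
        k₀, k₃, k₄, k₅, k₆, k₇⟩
      · refine ⟨x, e.1, z, hz, z', hz', 0, 1 + ((t + 1) * h + t), 0, w + r, p, refl0 x, c₁,
          (dist_self' x).le, hd₁, c₂, ?_, ?_, ?_⟩
        · exact (hce.trans hn hg).mono le_rfl (by rw [mul_add]; gcongr)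
        · rw [zero_add, add_assoc]
        · linarith
      · refine ⟨x, yr, z, hz, y₂, hy₂, 0, h₂, 0, W₂, p + w + (W₁ + W₃), refl0 x, c₁,
          (dist_self' x).le, ?_, k₄, k₅, ?_, ?_⟩
        · refine (dist_triangle' hn x e.2 yr).trans (add_le_add hxe ?_)
          exact (dist_triangle' hn e.2 xl yr).trans (add_le_add k₀ k₃)
        · calc 0 + (p + w + (W₁ + W₃)) + W₂ = p + w + (W₁ + W₃ + W₂) := by ring
            _ ≤ _ := by gcongr
        · nlinarith

/-- One level of the hierarchy: pairs are either well connected, or their first vertex is close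
to `A`; if vertices of `A` are joined to each other or to the next level `A'`, then the same
dichotomy holds for `A'`, with more hops and slightly larger distortion. -/
lemma level_step [Fintype V] [DecidableEq V] (hs : G.Symmetric) (hn : G.Nonneg)
    (hF : F ⊆ G.edges) {A A' : Finset V} {a : ℝ≥0∞} (ha : 1 ≤ a) {h t : ℕ}
    (ha2 : a + 6 / (t + 1 : ℕ) ≤ 2)
    (hP : ∀ x y, Conn G F H h x y (a * G.dist x y) ∨
      ∃ z ∈ A, Conn G F H h x z (2 * G.dist x y))
    (hA : ∀ v ∈ A, ∀ u ∈ A, Conn G F H 0 v u (G.dist v u) ∨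
      ∃ z ∈ A', Conn G F H 0 v z (G.dist v u)) (x y : V) :
    Conn G F H ((t + 2) * h + (t + 1)) x y ((a + 8 / (t + 1 : ℕ)) * G.dist x y) ∨
      ∃ z ∈ A', Conn G F H ((t + 2) * h + (t + 1)) x z (2 * G.dist x y) := by
  -- a pair at infinite distance is connected trivially, since `(a + 8 / (t + 1)) * ⊤ = ⊤`
  by_cases hd : G.dist x y = ⊤
  · left
    refine ⟨∅, by simp, by simp, fun E _ _ _ _ s hs1 _ => ?_⟩
    have h1 : a + 8 / (t + 1 : ℕ) ≠ 0 := fun h0 => by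
      rw [add_eq_zero] at h0
      rw [h0.1] at ha
      exact absurd ha (by simp)
    rw [hd, ENNReal.mul_top h1, ENNReal.mul_top (by rintro rfl; simp at hs1)]
    exact le_top
  obtain ⟨l, hl, hw⟩ := exists_walk_eq_dist hn hd
  have ht0 : ((t + 1 : ℕ) : ℝ≥0∞) ≠ 0 := by simp
  have htt : ((t + 1 : ℕ) : ℝ≥0∞) ≠ ⊤ := ENNReal.natCast_ne_top _
  set T : ℝ≥0∞ := ((t + 1 : ℕ) : ℝ≥0∞)
  set D := G.dist x y with hD
  have hθ : D / T ≠ ⊤ := ENNReal.div_ne_top hd ht0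
  have hle : walkWeight G l ≤ T * (D / T) := by
    rw [hw, ENNReal.mul_div_cancel ht0 htt]
  rcases segments hs hn ha hθ hP t x y l hl hle with hg | ⟨xl, yr, z, hz, z', hz', h₁, h₂, W₁,
    W₂, W₃, k₁, k₂, -, k₃, k₄, k₅, k₆, k₇⟩
  · left
    rw [hw] at hg
    refine hg.mono (by nlinarith) ?_
    gcongr
    exact le_self_add
  rw [hw] at k₆
  set θ := D / T with hθd
  have hzz : G.dist z z' ≤ W₃ + 4 * θ := by
    have e1 : G.dist z xl ≤ 2 * θ := (k₂.symm hs).dist_le hs hF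
    have e2 : G.dist yr z' ≤ 2 * θ := k₄.dist_le hs hF
    calc G.dist z z' ≤ G.dist z xl + (G.dist xl yr + G.dist yr z') :=
          (dist_triangle' hn _ _ _).trans (by gcongr; exact dist_triangle' hn _ _ _)
      _ ≤ 2 * θ + (W₃ + 2 * θ) := by gcongr
      _ = W₃ + 4 * θ := by ring
  have hmul : ∀ c : ℝ≥0∞, c / T * D = c * θ := fun c => by
    rw [hθd, ENNReal.div_eq_inv_mul, ENNReal.div_eq_inv_mul]; ring
  have haW : ∀ W : ℝ≥0∞, W ≤ a * W := fun W => le_mul_of_one_le_left' ha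
  have hcz : Conn G F H (h₁ + h) x z (a * W₁ + 2 * θ) := k₁.trans hn k₂
  rcases hA z hz z' hz' with hc | ⟨u, hu, hc⟩
  · left
    refine ((hcz.trans hn hc).trans hn ((k₄.symm hs).trans hn k₅)).mono (by nlinarith) ?_
    calc a * W₁ + 2 * θ + G.dist z z' + (2 * θ + a * W₂)
        ≤ a * W₁ + 2 * θ + (a * W₃ + 4 * θ) + (2 * θ + a * W₂) := by
          gcongr; exact hzz.trans (by gcongr; exact haW _)
      _ = a * (W₁ + W₃ + W₂) + 8 * θ := by ring
      _ ≤ a * D + 8 * θ := by gcongr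
      _ = (a + 8 / T) * D := by rw [add_mul, hmul]
  · right
    refine ⟨u, hu, (hcz.trans hn hc).mono (by nlinarith) ?_⟩
    calc a * W₁ + 2 * θ + G.dist z z'
        ≤ a * W₁ + 2 * θ + (a * W₃ + 4 * θ) := by
          gcongr; exact hzz.trans (by gcongr; exact haW _)
      _ = a * (W₁ + W₃) + 6 * θ := by ring
      _ ≤ a * D + 6 * θ := by gcongr; exact le_self_add.trans k₆
      _ = (a + 6 / T) * D := by rw [add_mul, hmul]
      _ ≤ 2 * D := by gcongr

/-- The hop bound of a hierarchy of levels `A 0 = V, A 1, …, A (j + 1) = ∅`: all pairs are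
connected with distortion `1 + 8 j / m` using fewer than `(m + 1) ^ j` bought edges. -/
lemma hierarchy_conn [Fintype V] [DecidableEq V] (hs : G.Symmetric) (hn : G.Nonneg)
    (hF : F ⊆ G.edges) (A : ℕ → Finset V) (hA0 : ∀ v, v ∈ A 0) (m j : ℕ)
    (hm : 8 * (j + 1) ≤ m) (hAj : A (j + 1) = ∅)
    (hA : ∀ i ≤ j, ∀ v ∈ A i, ∀ u ∈ A i, Conn G F H 0 v u (G.dist v u) ∨
      ∃ z ∈ A (i + 1), Conn G F H 0 v z (G.dist v u)) (x y : V) :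
    Conn G F H ((m + 1) ^ j) x y (ENNReal.ofReal (1 + 8 * j / m) * G.dist x y) := by
  obtain ⟨t, rfl⟩ : ∃ t, m = t + 1 := ⟨m - 1, by omega⟩
  have hT : (0 : ℝ) < ((t + 1 : ℕ) : ℝ) := by positivity
  have hdiv : ∀ c : ℕ, ((c : ℝ≥0∞)) / ((t + 1 : ℕ) : ℝ≥0∞) =
      ENNReal.ofReal ((c : ℝ) / ((t + 1 : ℕ) : ℝ)) := fun c => by
    rw [ENNReal.ofReal_div_of_pos hT, ENNReal.ofReal_natCast, ENNReal.ofReal_natCast]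
  have key : ∀ i ≤ j, ∃ h, h + 1 ≤ (t + 2) ^ i ∧ ∀ x y,
      Conn G F H h x y (ENNReal.ofReal (1 + 8 * i / (t + 1 : ℕ)) * G.dist x y) ∨
      ∃ z ∈ A (i + 1), Conn G F H h x z (2 * G.dist x y) := by
    intro i
    induction i with
    | zero =>
      intro _
      refine ⟨0, by simp, fun x y => ?_⟩
      rcases hA 0 (Nat.zero_le _) x (hA0 x) y (hA0 y) with h | ⟨z, hz, h⟩
      · left; simpa using h
      · exact Or.inr ⟨z, hz, h.mono le_rfl (le_mul_of_one_le_left' (by norm_num))⟩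
    | succ i ih =>
      intro hi
      obtain ⟨h, hh, hP⟩ := ih (by omega)
      refine ⟨(t + 2) * h + (t + 1), ?_, fun x y => ?_⟩
      · calc (t + 2) * h + (t + 1) + 1 = (t + 2) * (h + 1) := by ring
          _ ≤ (t + 2) * (t + 2) ^ i := by gcongr
          _ = (t + 2) ^ (i + 1) := by ring
      have hnn : (0 : ℝ) ≤ 1 + 8 * i / (t + 1 : ℕ) := by positivity
      have h6 := hdiv 6
      have h8 := hdiv 8
      push_cast at h6 h8
      have := level_step (t := t) hs hn hF (a := ENNReal.ofReal (1 + 8 * i / (t + 1 : ℕ)))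
        (A := A (i + 1)) (A' := A (i + 1 + 1)) ?_ ?_ hP (hA (i + 1) hi) x y
      · have e : ENNReal.ofReal (1 + 8 * ((i + 1 : ℕ) : ℝ) / (t + 1 : ℕ)) =
            ENNReal.ofReal (1 + 8 * i / (t + 1 : ℕ)) + 8 / (t + 1 : ℕ) := by
          push_cast
          rw [h8, ← ENNReal.ofReal_add (by positivity) (by positivity)]
          congr 1
          ring
        rw [e]
        exact this
      · rw [ENNReal.one_le_ofReal]
        have : (0 : ℝ) ≤ 8 * i / (t + 1 : ℕ) := by positivity
        linarith
      · push_cast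
        rw [h6, ← ENNReal.ofReal_add (by positivity) (by positivity)]
        have h2 : (2 : ℝ≥0∞) = ENNReal.ofReal 2 := by simp
        rw [h2]
        apply ENNReal.ofReal_le_ofReal
        have hb : (8 * (i : ℝ) + 6) ≤ t + 1 := by
          have : 8 * i + 6 ≤ t + 1 := by omega
          exact_mod_cast this
        have : 8 * (i : ℝ) / (t + 1) + 6 / (t + 1) ≤ 1 := by
          rw [← add_div]
          exact (div_le_one (by positivity)).2 hb
        linarith
  obtain ⟨h, hh, hP⟩ := key j le_rfl
  rcases hP x y with hc | ⟨z, hz, -⟩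
  · exact hc.mono (by change h ≤ (t + 2) ^ j; omega) le_rfl
  · rw [hAj] at hz
    exact absurd hz (Finset.notMem_empty z)

end Connections

/-! ### Shortest-path trees and bunches -/

section Bunches

variable {G : WDigraph V}

/-- Distance from `v` to the nearest vertex of `S` (`∞` if there is none). -/
noncomputable def distTo (G : WDigraph V) (S : Finset V) (v : V) : ℝ≥0∞ :=
  ⨅ u ∈ S, G.dist v u

lemma distTo_le {S : Finset V} {u : V} (hu : u ∈ S) (v : V) : distTo G S v ≤ G.dist v u :=
  iInf₂_le u hu

lemma distTo_singleton (u v : V) : distTo G {u} v = G.dist v u := by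
  simp [distTo]

lemma distTo_le_edge (hn : G.Nonneg) (S : Finset V) {e : V × V} (he : e ∈ G.edges) :
    distTo G S e.1 ≤ ENNReal.ofReal (G.w e) + distTo G S e.2 := by
  simp only [distTo, ENNReal.add_iInf]
  refine le_iInf₂ fun u hu => (iInf₂_le u hu).trans ?_
  exact (dist_triangle' hn e.1 e.2 u).trans (by gcongr; exact dist_edge he)

lemma exists_distTo_eq {S : Finset V} {v : V} (h : distTo G S v ≠ ⊤) :
    ∃ u ∈ S, G.dist v u = distTo G S v := by
  have hne : S.Nonempty := by
    rw [Finset.nonempty_iff_ne_empty]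
    rintro rfl
    simp [distTo] at h
  obtain ⟨u, hu, hmin⟩ := Finset.exists_min_image S (G.dist v) hne
  exact ⟨u, hu, le_antisymm (le_iInf₂ hmin) (distTo_le hu v)⟩

/-- The shortest-path forest towards `S`: outside `S` every vertex has a first edge `nx v` on a
shortest path to `S`. The rank `r` is the least number of edges of such a path; it makes
the recursion terminate in the presence of zero weights. -/
lemma exists_next [Fintype V] [DecidableEq V] (hn : G.Nonneg) (S : Finset V) :
    ∃ (nx : V → V × V) (r : V → ℕ), ∀ v, v ∉ S → distTo G S v ≠ ⊤ →
      nx v ∈ G.edges ∧ (nx v).1 = v ∧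
      ENNReal.ofReal (G.w (nx v)) + distTo G S (nx v).2 ≤ distTo G S v ∧ r (nx v).2 < r v := by
  classical
  let Q : V → ℕ → Prop := fun v k => ∃ u ∈ S, ∃ l, IsWalkFrom G v u l ∧
    walkWeight G l ≤ distTo G S v ∧ l.length = k
  let r : V → ℕ := fun v => sInf {k | Q v k}
  have main : ∀ v, ∃ e : V × V, v ∉ S → distTo G S v ≠ ⊤ →
      e ∈ G.edges ∧ e.1 = v ∧
      ENNReal.ofReal (G.w e) + distTo G S e.2 ≤ distTo G S v ∧ r e.2 < r v := by
    intro v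
    by_cases hv : v ∉ S ∧ distTo G S v ≠ ⊤
    swap
    · exact ⟨(v, v), fun h1 h2 => absurd ⟨h1, h2⟩ hv⟩
    obtain ⟨hvS, hv⟩ := hv
    have hne : {k | Q v k}.Nonempty := by
      obtain ⟨u, hu, hd⟩ := exists_distTo_eq hv
      obtain ⟨l, hl, hw⟩ := exists_walk_eq_dist hn (hd ▸ hv)
      exact ⟨l.length, u, hu, l, hl, (hw.trans hd).le, rfl⟩
    obtain ⟨u, hu, l, hl, hw, hlen⟩ := Nat.sInf_mem hne
    cases l with
    | nil => cases hl; exact absurd hu hvS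
    | cons e l =>
      obtain ⟨he, rfl, hl⟩ := hl
      rw [walkWeight_cons hn] at hw
      have hd : distTo G S e.2 ≤ walkWeight G l := (distTo_le hu _).trans (dist_le_walkWeight hl)
      refine ⟨e, fun _ _ => ⟨he, rfl, (by gcongr : _ ≤ _).trans hw, ?_⟩⟩
      have hq : Q e.2 l.length := by
        refine ⟨u, hu, l, hl, ?_, rfl⟩
        exact (ENNReal.add_le_add_iff_left ENNReal.ofReal_ne_top).1
          (hw.trans (distTo_le_edge hn S he))
      calc r e.2 ≤ l.length := Nat.sInf_le hq
        _ < (e :: l).length := by simp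
        _ = r e.1 := hlen
  choose nx hnx using main
  exact ⟨nx, r, hnx⟩

/-- A subgraph that contains the forest edges of a set `C` closed under the forest preserves the
distances from `C` to `S`. -/
lemma forest_preserves (hn : G.Nonneg) {S : Finset V} {nx : V → V × V} {r : V → ℕ}
    (h : ∀ v, v ∉ S → distTo G S v ≠ ⊤ →
      nx v ∈ G.edges ∧ (nx v).1 = v ∧
      ENNReal.ofReal (G.w (nx v)) + distTo G S (nx v).2 ≤ distTo G S v ∧ r (nx v).2 < r v)
    (E : Finset (V × V)) (C : Set V)
    (hC : ∀ v ∈ C, v ∉ S → distTo G S v ≠ ⊤ → nx v ∈ E ∧ (nx v).2 ∈ C) :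
    ∀ v ∈ C, distTo G S v ≠ ⊤ → ∃ u ∈ S, (G.sub E).dist v u ≤ distTo G S v := by
  intro v
  induction hk : r v using Nat.strong_induction_on generalizing v with
  | _ k ih =>
    intro hv hd
    by_cases hvS : v ∈ S
    · exact ⟨v, hvS, by rw [dist_self']; exact zero_le⟩
    obtain ⟨h₁, h₂, h₃, h₄⟩ := h v hvS hd
    obtain ⟨h₅, h₆⟩ := hC v hv hvS hd
    obtain ⟨u, hu, hdu⟩ := ih _ (hk ▸ h₄) (nx v).2 rfl h₆
      (ne_top_of_le_ne_top hd (le_add_self.trans h₃))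
    refine ⟨u, hu, ?_⟩
    have he : (G.sub E).dist (nx v).1 (nx v).2 ≤ ENNReal.ofReal (G.w (nx v)) :=
      dist_edge (G := G.sub E) h₅
    rw [h₂] at he
    exact ((dist_triangle' (sub_nonneg' hn E) v (nx v).2 u).trans (add_le_add he hdu)).trans h₃

open Classical in
/-- The bunch of `v`: the vertices of `A` strictly closer to `v` than the next level `A'`. -/
noncomputable def bunch (G : WDigraph V) (A A' : Finset V) (v : V) : Finset V :=
  A.filter fun u => G.dist v u < distTo G A' v

/-- Exact level: shortest-path trees over the clusters dual to the bunches, and the forest to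
`A'`, preserve all bunch and pivot distances, with one edge per bunch member or pivot. -/
lemma exact_level [Fintype V] [DecidableEq V] (hn : G.Nonneg) (A A' : Finset V) {b : ℝ}
    (hb : ∀ v, ((bunch G A A' v).card : ℝ) ≤ b) :
    ∃ F ⊆ G.edges, (F.card : ℝ) ≤ Fintype.card V * (b + 1) ∧
      ∀ v, ∀ u ∈ A, (∀ E, F ⊆ E → (G.sub E).dist v u ≤ G.dist v u) ∨
        ∃ z ∈ A', ∀ E, F ⊆ E → (G.sub E).dist v z ≤ G.dist v u := by
  classical
  choose nx r hnx using fun S : Finset V => exists_next (G := G) hn S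
  let F₀ : Finset (V × V) := Finset.univ.biUnion fun v =>
    (bunch G A A' v).image (fun u => nx {u} v) ∪ {nx A' v}
  have hF₀ : ∀ v, ∀ u ∈ bunch G A A' v, nx {u} v ∈ F₀ := fun v u hu =>
    Finset.mem_biUnion.2 ⟨v, Finset.mem_univ _, Finset.mem_union_left _
      (Finset.mem_image_of_mem _ hu)⟩
  have hF₁ : ∀ v, nx A' v ∈ F₀ := fun v =>
    Finset.mem_biUnion.2 ⟨v, Finset.mem_univ _, Finset.mem_union_right _
      (Finset.mem_singleton_self _)⟩
  refine ⟨F₀.filter (· ∈ G.edges), fun e he => (Finset.mem_filter.1 he).2, ?_, ?_⟩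
  · have h1 : F₀.card ≤ ∑ v : V, ((bunch G A A' v).card + 1) := by
      refine Finset.card_biUnion_le.trans (Finset.sum_le_sum fun v _ => ?_)
      refine (Finset.card_union_le _ _).trans ?_
      rw [Finset.card_singleton]
      gcongr
      exact Finset.card_image_le
    calc ((F₀.filter (· ∈ G.edges)).card : ℝ) ≤ F₀.card := by
          exact_mod_cast Finset.card_filter_le _ _
      _ ≤ ∑ v : V, (((bunch G A A' v).card : ℝ) + 1) := by exact_mod_cast h1
      _ ≤ ∑ v : V, (b + 1) := by gcongr with v; exact hb v
      _ = _ := by rw [Finset.sum_const, nsmul_eq_mul, Finset.card_univ]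
  · intro v u hu
    by_cases hlt : G.dist v u < distTo G A' v
    · left
      intro E hE
      have hfp := forest_preserves hn (hnx {u}) E {x | u ∈ bunch G A A' x} ?_ v ?_ ?_
      · obtain ⟨u', hu', hle⟩ := hfp
        rw [Finset.mem_singleton] at hu'
        subst hu'
        rwa [distTo_singleton] at hle
      · intro x hx hxu hxd
        obtain ⟨h₁, h₂, h₃, -⟩ := hnx {u} x hxu hxd
        refine ⟨hE (Finset.mem_filter.2 ⟨hF₀ x u hx, h₁⟩), ?_⟩
        refine Finset.mem_filter.2 ⟨hu, ?_⟩
        have hx2 := (Finset.mem_filter.1 hx).2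
        have hed := distTo_le_edge hn A' h₁
        rw [h₂] at hed
        rw [distTo_singleton, distTo_singleton] at h₃
        exact (ENNReal.add_lt_add_iff_left ENNReal.ofReal_ne_top).1
          (h₃.trans_lt (hx2.trans_le hed))
      · exact Finset.mem_filter.2 ⟨hu, hlt⟩
      · rw [distTo_singleton]
        exact ne_top_of_lt hlt
    · rw [not_lt] at hlt
      by_cases hd : G.dist v u = ⊤
      · left
        intro E _
        rw [hd]
        exact le_top
      · right
        have hfp := forest_preserves hn (hnx A') (F₀.filter (· ∈ G.edges)) Set.univ ?_ v
          (Set.mem_univ _) (ne_top_of_le_ne_top hd hlt)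
        · obtain ⟨z, hz, hle⟩ := hfp
          exact ⟨z, hz, fun E hE => (dist_sub_mono hE v z).trans (hle.trans hlt)⟩
        · intro x _ hx hxd
          exact ⟨Finset.mem_filter.2 ⟨hF₁ x, (hnx A' x hx hxd).1⟩, Set.mem_univ _⟩

/-- Pair level: the bunch and pivot pairs of the vertices of `A` only. -/
lemma pair_level [DecidableEq V] (A A' : Finset V) {b : ℝ}
    (hb : ∀ v, ((bunch G A A' v).card : ℝ) ≤ b) :
    ∃ H : Finset (V × V), (H.card : ℝ) ≤ A.card * (b + 1) ∧
      ∀ v ∈ A, ∀ u ∈ A, (v, u) ∈ H ∨ G.dist v u = ⊤ ∨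
        ∃ z ∈ A', (v, z) ∈ H ∧ G.dist v z ≤ G.dist v u := by
  have hp : ∀ v, ∃ z, distTo G A' v ≠ ⊤ → z ∈ A' ∧ G.dist v z = distTo G A' v := fun v => by
    by_cases h : distTo G A' v = ⊤
    · exact ⟨v, fun h' => absurd h h'⟩
    · obtain ⟨z, hz, hd⟩ := exists_distTo_eq h
      exact ⟨z, fun _ => ⟨hz, hd⟩⟩
  choose pv hpv using hp
  let H : Finset (V × V) := A.biUnion fun v =>
    (bunch G A A' v).image (fun u => (v, u)) ∪ {(v, pv v)}
  refine ⟨H, ?_, fun v hv u hu => ?_⟩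
  · have h1 : H.card ≤ ∑ v ∈ A, ((bunch G A A' v).card + 1) := by
      refine Finset.card_biUnion_le.trans (Finset.sum_le_sum fun v _ => ?_)
      refine (Finset.card_union_le _ _).trans ?_
      rw [Finset.card_singleton]
      gcongr
      exact Finset.card_image_le
    calc (H.card : ℝ) ≤ ∑ v ∈ A, (((bunch G A A' v).card : ℝ) + 1) := by exact_mod_cast h1
      _ ≤ ∑ v ∈ A, (b + 1) := by gcongr with v; exact hb v
      _ = _ := by rw [Finset.sum_const, nsmul_eq_mul]
  · by_cases hlt : G.dist v u < distTo G A' v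
    · left
      exact Finset.mem_biUnion.2 ⟨v, hv, Finset.mem_union_left _
        (Finset.mem_image_of_mem _ (Finset.mem_filter.2 ⟨hu, hlt⟩))⟩
    · right
      rw [not_lt] at hlt
      by_cases hd : G.dist v u = ⊤
      · exact Or.inl hd
      · right
        obtain ⟨hz, hz'⟩ := hpv v (ne_top_of_le_ne_top hd hlt)
        exact ⟨pv v, hz, Finset.mem_biUnion.2 ⟨v, hv, Finset.mem_union_right _
          (Finset.mem_singleton_self _)⟩, hz'.trans_le hlt⟩

/-- Greedy hitting set: if all sets of `𝓕` lie in `A` and have size at least `b`, then each new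
vertex can be chosen to hit a `b / |A|` fraction of the sets not yet hit. -/
lemma exists_hitting [DecidableEq V] (A : Finset V) {b : ℝ} (hb : 0 < b)
    (𝓕 : Finset (Finset V)) (h𝓕 : ∀ S ∈ 𝓕, S ⊆ A ∧ b ≤ S.card) (t : ℕ) :
    ∃ T : Finset V, T.card ≤ t ∧
      ((𝓕.filter fun S => Disjoint S T).card : ℝ) ≤ 𝓕.card * (1 - b / A.card) ^ t := by
  induction t with
  | zero => exact ⟨∅, by simp, by simp⟩
  | succ t ih =>
    obtain ⟨T, hT, hle⟩ := ih
    set 𝓡 := 𝓕.filter fun S => Disjoint S T with h𝓡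
    by_cases hne : 𝓡 = ∅
    · refine ⟨T, by omega, ?_⟩
      rw [← h𝓡, hne, Finset.card_empty, Nat.cast_zero]
      rcases 𝓕.eq_empty_or_nonempty with h0 | ⟨S, hS⟩
      · simp [h0]
      · have h1 : (b : ℝ) ≤ A.card := (h𝓕 S hS).2.trans
          (by exact_mod_cast Finset.card_le_card (h𝓕 S hS).1)
        have : b / A.card ≤ 1 := div_le_one_of_le₀ h1 (by positivity)
        have : 0 ≤ 1 - b / A.card := by linarith
        positivity
    obtain ⟨S₀, hS₀⟩ := Finset.nonempty_iff_ne_empty.2 hne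
    have hS₀' := h𝓕 S₀ (Finset.mem_filter.1 hS₀).1
    have hAb : b ≤ A.card := hS₀'.2.trans (by exact_mod_cast Finset.card_le_card hS₀'.1)
    have hA : (0 : ℝ) < A.card := hb.trans_le hAb
    -- double counting: some vertex of `A` lies in a `b / |A|` fraction of the sets not yet hit
    have hdc : ∑ x ∈ A, ((𝓡.filter fun S => x ∈ S).card : ℝ) = ∑ S ∈ 𝓡, (S.card : ℝ) := by
      have h1 : ∀ x ∈ A, ((𝓡.filter fun S => x ∈ S).card : ℝ) =
          ∑ S ∈ 𝓡, if x ∈ S then (1 : ℝ) else 0 := fun x _ => by simp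
      rw [Finset.sum_congr rfl h1, Finset.sum_comm]
      refine Finset.sum_congr rfl fun S hS => ?_
      have hSA := (h𝓕 S (Finset.mem_filter.1 hS).1).1
      rw [Finset.sum_ite_mem, Finset.inter_eq_right.2 hSA]
      simp
    have hsum : (𝓡.card : ℝ) * b ≤ ∑ x ∈ A, ((𝓡.filter fun S => x ∈ S).card : ℝ) := by
      rw [hdc, ← nsmul_eq_mul]
      exact Finset.card_nsmul_le_sum _ _ _ fun S hS => (h𝓕 S (Finset.mem_filter.1 hS).1).2
    obtain ⟨x, hx, hxle⟩ : ∃ x ∈ A, (𝓡.card : ℝ) * b / A.card ≤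
        ((𝓡.filter fun S => x ∈ S).card : ℝ) := by
      by_contra hcon
      push Not at hcon
      have hAne : A.Nonempty := Finset.card_pos.1 (by exact_mod_cast hA)
      have := Finset.sum_lt_sum_of_nonempty hAne hcon
      rw [Finset.sum_const, nsmul_eq_mul, mul_div_cancel₀ _ hA.ne'] at this
      linarith
    refine ⟨insert x T, (Finset.card_insert_le _ _).trans (by omega), ?_⟩
    have hfil : (𝓕.filter fun S => Disjoint S (insert x T)) = 𝓡.filter fun S => x ∉ S := by
      ext S
      simp only [h𝓡, Finset.mem_filter, Finset.disjoint_insert_right]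
      tauto
    have hcard := Finset.card_filter_add_card_filter_not (s := 𝓡) (fun S => x ∈ S)
    have hcard' : ((𝓡.filter fun S => x ∈ S).card : ℝ) + ((𝓡.filter fun S => x ∉ S).card : ℝ) =
        𝓡.card := by exact_mod_cast hcard
    have hq : 0 ≤ 1 - b / A.card := by
      have : b / A.card ≤ 1 := div_le_one_of_le₀ hAb hA.le
      linarith
    rw [hfil]
    calc ((𝓡.filter fun S => x ∉ S).card : ℝ) ≤ 𝓡.card * (1 - b / A.card) := by
          rw [mul_sub, mul_one, ← mul_div_assoc]
          linarith
      _ ≤ 𝓕.card * (1 - b / A.card) ^ t * (1 - b / A.card) := by gcongr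
      _ = _ := by ring

/-- Sampling step of the hierarchy, derandomized: a next level `A'` that is smaller than `A` by a
factor `b / lam` while all bunches have size at most `b`. For `b > lam * |A|` it is empty. -/
lemma exists_next_level [Fintype V] [DecidableEq V] (G : WDigraph V) (A : Finset V) {b lam : ℝ}
    (hb : 0 < b) (hlam : 2 * Real.log (Fintype.card V) + 1 ≤ lam) :
    ∃ A' : Finset V, (A'.card : ℝ) ≤ A.card * (lam / b) ∧
      ∀ v, ((bunch G A A' v).card : ℝ) ≤ b := by
  classical
  let cand : V × V → Finset V := fun p => A.filter fun u => G.dist p.1 u ≤ G.dist p.1 p.2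
  let 𝓕 : Finset (Finset V) := (Finset.univ.image cand).filter fun S => b ≤ S.card
  have h𝓕 : ∀ S ∈ 𝓕, S ⊆ A ∧ b ≤ S.card := by
    intro S hS
    obtain ⟨h1, h2⟩ := Finset.mem_filter.1 hS
    obtain ⟨p, -, rfl⟩ := Finset.mem_image.1 h1
    exact ⟨Finset.filter_subset _ _, h2⟩
  have hcard : (𝓕.card : ℝ) ≤ (Fintype.card V : ℝ) ^ 2 := by
    have : 𝓕.card ≤ Fintype.card V ^ 2 := by
      refine (Finset.card_filter_le _ _).trans (Finset.card_image_le.trans ?_)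
      rw [Finset.card_univ, Fintype.card_prod, sq]
    exact_mod_cast this
  -- a set hitting every member of `𝓕` cuts all bunches down to size
  have hit : ∀ T : Finset V, (∀ S ∈ 𝓕, ¬ Disjoint S T) →
      ∀ v, ((bunch G A T v).card : ℝ) ≤ b := by
    intro T hT v
    by_contra hcon
    rw [not_le] at hcon
    have hne : (bunch G A T v).Nonempty :=
      Finset.card_pos.1 (by exact_mod_cast hb.trans hcon)
    obtain ⟨u₀, hu₀, hmax⟩ := Finset.exists_max_image _ (G.dist v) hne
    have hsub : bunch G A T v ⊆ cand (v, u₀) := fun u hu =>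
      Finset.mem_filter.2 ⟨(Finset.mem_filter.1 hu).1, hmax u hu⟩
    have hmem : cand (v, u₀) ∈ 𝓕 := by
      refine Finset.mem_filter.2 ⟨Finset.mem_image_of_mem _ (Finset.mem_univ _), ?_⟩
      exact hcon.le.trans (by exact_mod_cast Finset.card_le_card hsub)
    obtain ⟨z, hz₁, hz₂⟩ := Finset.not_disjoint_iff.1 (hT _ hmem)
    have h1 := (Finset.mem_filter.1 hz₁).2
    have h2 := (Finset.mem_filter.1 hu₀).2
    exact absurd (h2.trans_le (distTo_le hz₂ v)) (not_lt.2 h1)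
  rcases 𝓕.eq_empty_or_nonempty with h0 | ⟨S, hS⟩
  · have hlog : 0 ≤ Real.log (Fintype.card V) := Real.log_natCast_nonneg _
    have : 0 ≤ lam := by linarith
    exact ⟨∅, by simp; positivity, hit ∅ (by simp [h0])⟩
  have hAb : b ≤ A.card :=
    (h𝓕 S hS).2.trans (by exact_mod_cast Finset.card_le_card (h𝓕 S hS).1)
  have hA : (0 : ℝ) < A.card := hb.trans_le hAb
  have hn : (0 : ℝ) < Fintype.card V :=
    hA.trans_le (by exact_mod_cast Finset.card_le_univ A)
  set L := Real.log (Fintype.card V) with hL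
  have hL0 : 0 ≤ L := Real.log_natCast_nonneg _
  obtain ⟨T, hT, hle⟩ := exists_hitting A hb 𝓕 h𝓕 (⌊A.card / b * (2 * L)⌋₊ + 1)
  refine ⟨T, ?_, hit T ?_⟩
  · have h1 : (1 : ℝ) ≤ A.card / b := (one_le_div hb).2 hAb
    calc (T.card : ℝ) ≤ (⌊A.card / b * (2 * L)⌋₊ : ℝ) + 1 := by exact_mod_cast hT
      _ ≤ A.card / b * (2 * L) + A.card / b := by
          gcongr
          exact Nat.floor_le (by positivity)
      _ = A.card / b * (2 * L + 1) := by ring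
      _ ≤ A.card / b * lam := by gcongr
      _ = A.card * (lam / b) := by ring
  · have hlt : (𝓕.card : ℝ) * (1 - b / A.card) ^ (⌊A.card / b * (2 * L)⌋₊ + 1) < 1 := by
      set t := ⌊A.card / b * (2 * L)⌋₊ + 1
      have ht : A.card / b * (2 * L) < t := by
        have := Nat.lt_floor_add_one (A.card / b * (2 * L))
        exact_mod_cast this
      have ht' : 2 * L < t * (b / A.card) := by
        calc 2 * L = A.card / b * (2 * L) * (b / A.card) := by field_simp
          _ < t * (b / A.card) := by gcongr
      have hq : 0 ≤ 1 - b / A.card := by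
        have : b / A.card ≤ 1 := div_le_one_of_le₀ hAb hA.le
        linarith
      calc (𝓕.card : ℝ) * (1 - b / A.card) ^ t
          ≤ (Fintype.card V : ℝ) ^ 2 * (Real.exp (-(b / A.card))) ^ t := by
            gcongr
            have := Real.add_one_le_exp (-(b / (A.card : ℝ)))
            linarith
        _ = Real.exp (2 * L + t * -(b / A.card)) := by
            rw [Real.exp_add, Real.exp_nat_mul, two_mul, Real.exp_add, hL, Real.exp_log hn, sq]
        _ < 1 := by
            rw [Real.exp_lt_one_iff]
            linarith
    have h0 : (𝓕.filter fun S => Disjoint S T).card = 0 := by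
      have : ((𝓕.filter fun S => Disjoint S T).card : ℝ) < 1 := hle.trans_lt hlt
      have : (𝓕.filter fun S => Disjoint S T).card < 1 := by exact_mod_cast this
      omega
    rw [Finset.card_eq_zero, Finset.filter_eq_empty_iff] at h0
    exact fun S hS => h0 hS

end Bunches

/-! ### One round of the construction -/

section Rounds

variable {G : WDigraph V}

lemma Conn.of_top {F H : Finset (V × V)} {x y : V} (h : G.dist x y = ⊤) :
    Conn G F H 0 x y (G.dist x y) :=
  Conn.exact fun _ _ => by rw [h]; exact le_top

/-- One round: `e` exact levels shrinking by the factor `D`, followed by `s` pair levels with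
squared shrinking factors `Y, Y ^ 2, Y ^ 4, …`, each of which leaves about `N` pairs. The subgraph
`F` realizes the exact levels, and the pairs in `H` are left to later rounds. -/
lemma round_conn [Fintype V] [DecidableEq V] (hs : G.Symmetric) (hn : G.Nonneg) {lam D N Y : ℝ}
    (hlam : 2 * Real.log (Fintype.card V) + 1 ≤ lam) (hD : 1 ≤ D) (hY : 1 ≤ Y) (hN : 0 ≤ N)
    (e s j m : ℕ) (hj : e + s = j + 1) (hm : 8 * (j + 1) ≤ m)
    (h₁ : (Fintype.card V : ℝ) / D ^ e ≤ N / Y) (h₂ : N / Y ^ 2 ^ s < 1) :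
    ∃ F ⊆ G.edges, ∃ H : Finset (V × V),
      (F.card : ℝ) ≤ e * (2 * lam * (Fintype.card V * D)) ∧ (H.card : ℝ) ≤ s * (2 * lam * N) ∧
      ∀ x y, Conn G F H ((m + 1) ^ j) x y (ENNReal.ofReal (1 + 8 * j / m) * G.dist x y) := by
  have hL0 : 0 ≤ Real.log (Fintype.card V) := Real.log_natCast_nonneg _
  have hlam1 : 1 ≤ lam := by linarith
  have hD0 : 0 < D := by linarith
  have hY0 : 0 < Y := by linarith
  let b : ℕ → ℝ := fun i => if i < e then lam * D else lam * Y ^ 2 ^ (i - e)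
  have hb : ∀ i, 0 < b i := fun i => by
    simp only [b]; split_ifs <;> positivity
  choose nxt hnxt hbun using fun (i : ℕ) (A : Finset V) =>
    exists_next_level G A (hb i) hlam
  let A : ℕ → Finset V := fun i => Nat.rec Finset.univ (fun i A => nxt i A) i
  have hA0 : A 0 = Finset.univ := rfl
  have hAs : ∀ i, A (i + 1) = nxt i (A i) := fun _ => rfl
  have hbun' : ∀ i v, ((bunch G (A i) (A (i + 1)) v).card : ℝ) ≤ b i := fun i v => hbun i (A i) v
  have hsz1 : ∀ i ≤ e, ((A i).card : ℝ) ≤ Fintype.card V / D ^ i := by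
    intro i
    induction i with
    | zero => intro _; simp [hA0]
    | succ i ih =>
      intro hi
      rw [hAs]
      refine (hnxt i (A i)).trans ?_
      have : b i = lam * D := if_pos (by omega)
      rw [this]
      calc ((A i).card : ℝ) * (lam / (lam * D)) ≤
          Fintype.card V / D ^ i * (lam / (lam * D)) := by gcongr; exact ih (by omega)
        _ = Fintype.card V / D ^ (i + 1) := by field_simp; ring
  have hsz2 : ∀ i, ((A (e + i)).card : ℝ) ≤ N / Y ^ 2 ^ i := by
    intro i
    induction i with
    | zero => simpa using (hsz1 e le_rfl).trans h₁
    | succ i ih =>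
      rw [← add_assoc, hAs]
      refine (hnxt (e + i) (A (e + i))).trans ?_
      have : b (e + i) = lam * Y ^ 2 ^ i := by simp [b]
      rw [this]
      calc ((A (e + i)).card : ℝ) * (lam / (lam * Y ^ 2 ^ i)) ≤
          N / Y ^ 2 ^ i * (lam / (lam * Y ^ 2 ^ i)) := by gcongr
        _ = N / Y ^ 2 ^ (i + 1) := by
          rw [pow_succ 2 i, mul_two, pow_add]
          field_simp
  have hend : A (j + 1) = ∅ := by
    rw [← hj, ← Finset.card_eq_zero]
    have : ((A (e + s)).card : ℝ) < 1 := (hsz2 s).trans_lt h₂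
    have : (A (e + s)).card < 1 := by exact_mod_cast this
    omega
  choose Fi hFi hFc hFe using fun i => exact_level hn (A i) (A (i + 1)) (hbun' i)
  choose Hi hHc hHe using fun i => pair_level (G := G) (A i) (A (i + 1)) (hbun' i)
  refine ⟨(Finset.range e).biUnion Fi, Finset.biUnion_subset.2 fun i _ => hFi i,
    (Finset.range s).biUnion fun i => Hi (e + i), ?_, ?_, fun x y => ?_⟩
  · calc (((Finset.range e).biUnion Fi).card : ℝ) ≤ ∑ i ∈ Finset.range e, ((Fi i).card : ℝ) := by
          exact_mod_cast Finset.card_biUnion_le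
      _ ≤ ∑ i ∈ Finset.range e, 2 * lam * (Fintype.card V * D) := by
          refine Finset.sum_le_sum fun i hi => (hFc i).trans ?_
          have : b i = lam * D := if_pos (Finset.mem_range.1 hi)
          rw [this]
          have h1 : 1 ≤ lam * D := one_le_mul_of_one_le_of_one_le hlam1 hD
          calc (Fintype.card V : ℝ) * (lam * D + 1) ≤ Fintype.card V * (lam * D + lam * D) := by
                gcongr
            _ = _ := by ring
      _ = _ := by simp
  · calc (((Finset.range s).biUnion fun i => Hi (e + i)).card : ℝ)
          ≤ ∑ i ∈ Finset.range s, ((Hi (e + i)).card : ℝ) := by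
          exact_mod_cast Finset.card_biUnion_le
      _ ≤ ∑ i ∈ Finset.range s, 2 * lam * N := by
          refine Finset.sum_le_sum fun i hi => (hHc (e + i)).trans ?_
          have : b (e + i) = lam * Y ^ 2 ^ i := by simp [b]
          rw [this]
          have h1 : 1 ≤ lam * Y ^ 2 ^ i :=
            one_le_mul_of_one_le_of_one_le hlam1 (one_le_pow₀ hY)
          calc ((A (e + i)).card : ℝ) * (lam * Y ^ 2 ^ i + 1)
              ≤ N / Y ^ 2 ^ i * (lam * Y ^ 2 ^ i + lam * Y ^ 2 ^ i) := by
                gcongr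
                exact hsz2 i
            _ = 2 * lam * N := by field_simp; ring
      _ = _ := by simp
  · refine hierarchy_conn hs hn (Finset.biUnion_subset.2 fun i _ => hFi i) A
      (fun v => by simp [hA0]) m j hm hend (fun i hi v hv u hu => ?_) x y
    by_cases hie : i < e
    · have hsub : Fi i ⊆ (Finset.range e).biUnion Fi :=
        Finset.subset_biUnion_of_mem Fi (Finset.mem_range.2 hie)
      rcases hFe i v u hu with h | ⟨z, hz, h⟩
      · exact Or.inl (Conn.exact fun E hE => h E (hsub.trans hE))
      · exact Or.inr ⟨z, hz, Conn.exact fun E hE => h E (hsub.trans hE)⟩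
    · obtain ⟨i, rfl⟩ : ∃ i', i = e + i' := ⟨i - e, by omega⟩
      have hsub : Hi (e + i) ⊆ (Finset.range s).biUnion fun i => Hi (e + i) :=
        Finset.subset_biUnion_of_mem (fun i => Hi (e + i)) (Finset.mem_range.2 (by omega))
      rcases hHe (e + i) v hv u hu with h | h | ⟨z, hz, h, hle⟩
      · exact Or.inl (Conn.pair (hsub h))
      · exact Or.inl (Conn.of_top h)
      · exact Or.inr ⟨z, hz, (Conn.pair (hsub h)).mono le_rfl hle⟩

/-- `E` is a symmetric subgraph of `G` preserving the distances of the pairs in `P` up to the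
factor `s`. -/
def Preserves (G : WDigraph V) (P : Finset (V × V)) (s : ℝ) (E : Finset (V × V)) : Prop :=
  E ⊆ G.edges ∧ (∀ e ∈ E, (e.2, e.1) ∈ E) ∧
    ∀ p ∈ P, (G.sub E).dist p.1 p.2 ≤ ENNReal.ofReal s * G.dist p.1 p.2

lemma Preserves.mono {P E : Finset (V × V)} {s t : ℝ} (h : Preserves G P s E) (hst : s ≤ t) :
    Preserves G P t E :=
  ⟨h.1, h.2.1, fun p hp => (h.2.2 p hp).trans (by gcongr)⟩

/-- Composition of a round with a preserver for the pairs it leaves. -/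
lemma round_compose [DecidableEq V] (hs : G.Symmetric) {F H P E' : Finset (V × V)}
    (hF : F ⊆ G.edges) {h : ℕ} {s t : ℝ} (hs1 : 1 ≤ s)
    (hc : ∀ x y, Conn G F H h x y (ENNReal.ofReal t * G.dist x y)) (hE' : Preserves G H s E') :
    ∃ E, Preserves G P (s * t) E ∧ E.card ≤ E'.card + 2 * F.card + 2 * (P.card * h) := by
  choose E₁ h₁ h₂ h₃ using hc
  let W : Finset (V × V) := F ∪ P.biUnion fun p => E₁ p.1 p.2
  have hW : W ⊆ G.edges := Finset.union_subset hF (Finset.biUnion_subset.2 fun p _ => h₁ _ _)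
  have hWc : W.card ≤ F.card + P.card * h := by
    refine (Finset.card_union_le _ _).trans ?_
    gcongr
    exact Finset.card_biUnion_le_card_mul _ _ _ fun p _ => h₂ _ _
  let E : Finset (V × V) := E' ∪ (W ∪ W.image Prod.swap)
  have hEG : E ⊆ G.edges := by
    refine Finset.union_subset hE'.1 (Finset.union_subset hW fun e he => ?_)
    obtain ⟨f, hf, rfl⟩ := Finset.mem_image.1 he
    exact (hs f (hW hf)).1
  have hEs : ∀ e ∈ E, (e.2, e.1) ∈ E := by
    intro e he
    simp only [E, Finset.mem_union, Finset.mem_image] at he ⊢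
    rcases he with he | he | ⟨f, hf, rfl⟩
    · exact Or.inl (hE'.2.1 e he)
    · exact Or.inr (Or.inr ⟨e, he, rfl⟩)
    · exact Or.inr (Or.inl hf)
  have hWE : W ⊆ E := Finset.subset_union_left.trans Finset.subset_union_right
  refine ⟨E, ⟨hEG, hEs, fun p hp => ?_⟩, ?_⟩
  · have := h₃ p.1 p.2 E hEG hEs (Finset.subset_union_left.trans hWE)
      (((Finset.subset_biUnion_of_mem (fun p : V × V => E₁ p.1 p.2) hp).trans
        Finset.subset_union_right).trans hWE) (ENNReal.ofReal s) (ENNReal.one_le_ofReal.2 hs1)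
      (fun q hq => (dist_sub_mono Finset.subset_union_left _ _).trans (hE'.2.2 q hq))
    rw [ENNReal.ofReal_mul (by linarith), mul_assoc]
    exact this
  · have h4 : (W.image Prod.swap).card ≤ W.card := Finset.card_image_le
    have h5 : E.card ≤ E'.card + (W ∪ W.image Prod.swap).card := Finset.card_union_le _ _
    have h6 : (W ∪ W.image Prod.swap).card ≤ W.card + (W.image Prod.swap).card :=
      Finset.card_union_le _ _
    omega

end Rounds

/-! ### Iterating the rounds -/

section Iteration

variable [Fintype V] [DecidableEq V] {G : WDigraph V}

/-- The late rounds. A set of pairs of size about `n * D / (m + 1) ^ J` with `J < X` is served by a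
round with `J + 1` levels, and the pairs left over admit `2 * k * (J - k) ≥ 3 * J / 2` in place of
`J`. The level count thus grows geometrically until `J ≥ X`; a round with `X + 1` exact levels
then leaves no pair. As the level counts form a geometric sequence, their sum is `O(X)`, and this
controls the total stretch: `R` bounds the sum of the values of `J` over the remaining rounds,
the last round counted with `X`. -/
lemma late_rounds (hs : G.Symmetric) (hn : G.Nonneg) {lam D : ℝ}
    (hlam : 2 * Real.log (Fintype.card V) + 1 ≤ lam) (hD : 1 ≤ D) {k m X : ℕ} (hk : 1 ≤ k)
    (hX : X = 2 ^ (k + 1)) (hDX : (Fintype.card V : ℝ) < D ^ X) (hm : 8 * (X + 1) ≤ m)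
    (hB : ((m : ℝ) + 1) ^ (2 * k) ≤ D) (d : ℕ) :
    ∀ (J R : ℕ) (P : Finset (V × V)), X ≤ J + d → 4 * k ≤ J → X ≤ R →
      (J < X → 4 * X ≤ R + 2 * J) →
      (P.card : ℝ) * ((m : ℝ) + 1) ^ J ≤ 2 * (k + 1) * lam * (Fintype.card V * D) →
      ∃ E, Preserves G P (Real.exp (8 * R / m)) E ∧
        (E.card : ℝ) ≤ (d + 1) * ((4 * (k + 1) + 4 * (X + 1)) * lam * (Fintype.card V * D)) := by
  have hL0 : 0 ≤ Real.log (Fintype.card V) := Real.log_natCast_nonneg _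
  have hlam1 : 1 ≤ lam := by linarith
  have hD0 : 0 < D := by linarith
  have hm0 : (0 : ℝ) < m := by
    have : 0 < m := by omega
    exact_mod_cast this
  set n : ℝ := (Fintype.card V : ℝ) with hndef
  have hn0 : 0 ≤ n := Nat.cast_nonneg _
  -- the cost of a single round
  have cost : ∀ {E F P : Finset (V × V)} {e h : ℕ} {c : ℝ}, (E.card : ℝ) ≤ c + 2 * F.card +
      2 * (P.card * ((m : ℝ) + 1) ^ h) → (F.card : ℝ) ≤ e * (2 * lam * (n * D)) → e ≤ X + 1 →
      (P.card : ℝ) * ((m : ℝ) + 1) ^ h ≤ 2 * (k + 1) * lam * (n * D) →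
      (E.card : ℝ) ≤ c + (4 * (k + 1) + 4 * (X + 1)) * lam * (n * D) := by
    intro E F P e h c h1 h2 h3 h4
    have h5 : (e : ℝ) ≤ X + 1 := by exact_mod_cast h3
    have h6 : (e : ℝ) * (2 * lam * (n * D)) ≤ (X + 1) * (2 * lam * (n * D)) := by gcongr
    linarith
  -- the last round leaves no pairs
  have terminal : ∀ (J R : ℕ) (P : Finset (V × V)), X ≤ J → X ≤ R →
      (P.card : ℝ) * ((m : ℝ) + 1) ^ J ≤ 2 * (k + 1) * lam * (n * D) →
      ∃ E, Preserves G P (Real.exp (8 * R / m)) E ∧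
        (E.card : ℝ) ≤ (4 * (k + 1) + 4 * (X + 1)) * lam * (n * D) := by
    intro J R P hJ hR hP
    have hc0 : 0 < Fintype.card V ∨ Fintype.card V = 0 := by omega
    obtain ⟨Y, hY, hY₁, hY₂⟩ : ∃ Y : ℝ, 1 ≤ Y ∧ n / D ^ (X + 1) ≤ 1 / Y ∧ 1 / Y ^ 2 ^ 0 < 1 := by
      have hDX' : n < D ^ (X + 1) := hDX.trans_le (pow_le_pow_right₀ hD (by omega))
      rcases hc0 with h0 | h0
      · have hn1 : 0 < n := by rw [hndef]; exact_mod_cast h0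
        refine ⟨D ^ (X + 1) / n, ((one_lt_div hn1).2 hDX').le, by rw [one_div_div], ?_⟩
        rw [pow_zero, pow_one, one_div_div]
        exact (div_lt_one (by positivity)).2 hDX'
      · have hn1 : n = 0 := by simp [hndef, h0]
        exact ⟨2, by norm_num, by rw [hn1]; norm_num, by norm_num⟩
    obtain ⟨F, hF, H, hFc, hHc, hconn⟩ := round_conn hs hn hlam hD hY zero_le_one (X + 1) 0 X m
      (by omega) hm hY₁ hY₂
    have hH : H = ∅ := by
      rw [← Finset.card_eq_zero]
      have : (H.card : ℝ) ≤ 0 := by simpa using hHc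
      exact_mod_cast le_antisymm this (Nat.cast_nonneg _)
    have hE' : Preserves G H 1 ∅ := by
      refine ⟨Finset.empty_subset _, by simp, by simp [hH]⟩
    obtain ⟨E, hE, hEc⟩ := round_compose (P := P) hs hF le_rfl hconn hE'
    refine ⟨E, hE.mono ?_, ?_⟩
    · rw [one_mul]
      have h1 : (8 * X / m : ℝ) ≤ 8 * R / m := by gcongr
      have h2 := Real.add_one_le_exp (8 * R / m : ℝ)
      linarith
    · have h1 : (E.card : ℝ) ≤ 0 + 2 * F.card + 2 * (P.card * ((m : ℝ) + 1) ^ X) := by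
        rw [Finset.card_empty] at hEc
        exact_mod_cast hEc
      have h2 : (P.card : ℝ) * ((m : ℝ) + 1) ^ X ≤ P.card * ((m : ℝ) + 1) ^ J := by
        gcongr
        linarith
      have := cost h1 (by exact_mod_cast hFc) le_rfl (h2.trans hP)
      rwa [zero_add] at this
  induction d with
  | zero =>
    intro J R P hJ _ hR _ hP
    obtain ⟨E, hE, hEc⟩ := terminal J R P hJ hR hP
    exact ⟨E, hE, by rwa [Nat.cast_zero, zero_add, one_mul]⟩
  | succ d ih =>
    intro J R P hJ hJk hR hRJ hP
    by_cases hJX : X ≤ J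
    · obtain ⟨E, hE, hEc⟩ := terminal J R P hJX hR hP
      refine ⟨E, hE, hEc.trans (le_mul_of_one_le_left (by positivity) ?_)⟩
      push_cast
      linarith [Nat.cast_nonneg (α := ℝ) d]
    rw [not_le] at hJX
    obtain ⟨b, rfl⟩ : ∃ b, J = k + (b + 1) := ⟨J - k - 1, by omega⟩
    have hRJ' := hRJ hJX
    have h₁ : n / D ^ (b + 1) ≤ n / D ^ b / D := by rw [div_div, pow_succ]
    have h₂ : n / D ^ b / D ^ 2 ^ (k + 1) < 1 := by
      rw [← hX, div_div, div_lt_one (by positivity)]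
      exact hDX.trans_le (le_mul_of_one_le_left (by positivity) (one_le_pow₀ hD))
    obtain ⟨F, hF, H, hFc, hHc, hconn⟩ := round_conn hs hn hlam hD hD
      (by positivity : 0 ≤ n / D ^ b) (b + 1) (k + 1) (k + (b + 1)) m (by omega) (by omega) h₁ h₂
    have hJ' : 3 * (k + (b + 1)) ≤ 2 * (2 * k * (b + 1)) := by nlinarith
    have hH : (H.card : ℝ) * ((m : ℝ) + 1) ^ (2 * k * (b + 1)) ≤ 2 * (k + 1) * lam * (n * D) := by
      calc (H.card : ℝ) * ((m : ℝ) + 1) ^ (2 * k * (b + 1))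
          ≤ (((k + 1 : ℕ) : ℝ) * (2 * lam * (n / D ^ b))) * D ^ (b + 1) := by
            rw [pow_mul]
            gcongr
        _ = 2 * (k + 1) * lam * (n * D) := by
            push_cast
            field_simp
            ring
    obtain ⟨E', hE', hEc'⟩ := ih (2 * k * (b + 1)) (R - (k + (b + 1))) H (by omega) (by omega)
      (by omega) (fun _ => by omega) hH
    obtain ⟨E, hE, hEc⟩ := round_compose (P := P) hs hF (Real.one_le_exp (by positivity)) hconn hE'
    refine ⟨E, hE.mono ?_, ?_⟩
    · rw [Nat.cast_sub (by omega)]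
      have h2 := Real.add_one_le_exp (8 * ((k + (b + 1) : ℕ) : ℝ) / m : ℝ)
      calc Real.exp (8 * ((R : ℝ) - ((k + (b + 1) : ℕ) : ℝ)) / m) *
            (1 + 8 * ((k + (b + 1) : ℕ) : ℝ) / m)
          ≤ Real.exp (8 * ((R : ℝ) - ((k + (b + 1) : ℕ) : ℝ)) / m) *
            Real.exp (8 * ((k + (b + 1) : ℕ) : ℝ) / m) := by
            gcongr
            linarith
        _ = Real.exp (8 * R / m) := by
            rw [← Real.exp_add]
            congr 1
            ring
    · have h1 : (E.card : ℝ) ≤ E'.card + 2 * F.card +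
          2 * (P.card * ((m : ℝ) + 1) ^ (k + (b + 1))) := by exact_mod_cast hEc
      have := cost h1 hFc (by omega) hP
      push_cast
      linarith

/-- The complete construction in terms of its parameters: a round with `k + 1` levels for `P`, a
round with `4 * k + 1` levels for the pairs it leaves, and then the late rounds. -/
lemma exists_preserver (hs : G.Symmetric) (hn : G.Nonneg) {lam Q D : ℝ}
    (hlam : 2 * Real.log (Fintype.card V) + 1 ≤ lam) {k m₁ m₂ X : ℕ} (hk : 1 ≤ k)
    (hX : X = 2 ^ (k + 1)) (hQ : 1 ≤ Q) (hQn : Q ^ (X - 1) = Fintype.card V)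
    (hm₁ : 40 * k ≤ m₁) (hm₂ : 8 * (X + 1) ≤ m₂) (hD : D = Q * ((m₁ : ℝ) + 1) ^ (2 * k))
    (hB : ((m₂ : ℝ) + 1) ^ (2 * k) ≤ D) (P : Finset (V × V)) :
    ∃ E, Preserves G P
        (Real.exp (32 * X / m₂) * (1 + 32 * k / m₁) * (1 + 8 * k / m₁)) E ∧
      (E.card : ℝ) ≤ 32 * X ^ 2 * lam * (Fintype.card V * D) +
        2 * (P.card * ((m₁ : ℝ) + 1) ^ k) := by
  have hL0 : 0 ≤ Real.log (Fintype.card V) := Real.log_natCast_nonneg _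
  have hlam1 : 1 ≤ lam := by linarith
  have hQ0 : 0 < Q := by linarith
  set n : ℝ := (Fintype.card V : ℝ) with hndef
  set R : ℝ := ((m₁ : ℝ) + 1) ^ (2 * k) with hR
  have hX2 : k + 2 ≤ X + 1 := by
    have := Nat.lt_two_pow_self (n := k + 1)
    omega
  have hm₁0 : 0 < m₁ := by omega
  have hR1 : 1 < R := one_lt_pow₀ (by simpa using hm₁0) (by omega)
  have hR0 : 0 < R := by linarith
  have hD1 : 1 ≤ D := hD ▸ one_le_mul_of_one_le_of_one_le hQ hR1.le
  have hD0 : 0 < D := by linarith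
  have hn1 : 1 ≤ n := hQn ▸ one_le_pow₀ hQ
  have hQX : Q ^ X = n * Q := by rw [← hQn, ← pow_succ]; congr 1; omega
  have hDX : n < D ^ X := by
    rw [hD, mul_pow, hQX]
    calc n ≤ n * Q := le_mul_of_one_le_right (by linarith) hQ
      _ < n * Q * R ^ X := lt_mul_of_one_lt_right (by positivity) (one_lt_pow₀ hR1 (by omega))
  -- the round for `P`
  obtain ⟨F₁, hF₁, H₁, hFc₁, hHc₁, hconn₁⟩ := round_conn hs hn hlam hD1 (one_le_pow₀ hQ : 1 ≤ Q ^ 2)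
    (by positivity : 0 ≤ n * Q / R) 1 k k m₁ (by omega) (by omega)
    (by rw [← hndef, hD]; apply le_of_eq; field_simp)
    (by
      rw [← pow_mul, ← pow_succ', ← hX, hQX, div_div, div_lt_one (by positivity)]
      exact lt_mul_of_one_lt_left (by positivity) hR1)
  -- the round for `H₁`
  obtain ⟨b, hb⟩ : ∃ b, 3 * k = b + 1 := ⟨3 * k - 1, by omega⟩
  obtain ⟨F₂, hF₂, H₂, hFc₂, hHc₂, hconn₂⟩ := round_conn hs hn hlam hD1 hD1
    (by positivity : 0 ≤ n / D ^ b) (3 * k) (k + 1) (4 * k) m₁ (by omega) (by omega)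
    (by rw [hb, div_div, pow_succ])
    (by
      rw [← hX, div_div, div_lt_one (by positivity)]
      exact hDX.trans_le (le_mul_of_one_le_left (by positivity) (one_le_pow₀ hD1)))
  -- the late rounds, for `H₂`
  have hH₂ : (H₂.card : ℝ) * ((m₂ : ℝ) + 1) ^ (2 * k * (3 * k)) ≤
      2 * (k + 1) * lam * (n * D) := by
    calc (H₂.card : ℝ) * ((m₂ : ℝ) + 1) ^ (2 * k * (3 * k))
        ≤ (((k + 1 : ℕ) : ℝ) * (2 * lam * (n / D ^ b))) * D ^ (3 * k) := by
          rw [pow_mul]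
          gcongr
      _ = 2 * (k + 1) * lam * (n * D) := by
          rw [hb]
          push_cast
          field_simp
          ring
  obtain ⟨E₂, hE₂, hEc₂⟩ := late_rounds hs hn hlam hD1 hk hX hDX hm₂ hB X (2 * k * (3 * k))
    (4 * X) H₂ (by omega) (by nlinarith) (by omega) (fun _ => by omega) hH₂
  obtain ⟨E₁, hE₁, hEc₁⟩ := round_compose (P := H₁) hs hF₂ (Real.one_le_exp (by positivity))
    hconn₂ hE₂
  have hst : 1 ≤ Real.exp (8 * ((4 * X : ℕ) : ℝ) / m₂) * (1 + 8 * ((4 * k : ℕ) : ℝ) / m₁) :=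
    one_le_mul_of_one_le_of_one_le (Real.one_le_exp (by positivity))
      (le_add_of_nonneg_right (by positivity))
  obtain ⟨E, hE, hEc⟩ := round_compose (P := P) hs hF₁ hst hconn₁ hE₁
  refine ⟨E, hE.mono (le_of_eq ?_), ?_⟩
  · push_cast
    ring_nf
  · have h1 : (E.card : ℝ) ≤ E₁.card + 2 * F₁.card + 2 * (P.card * ((m₁ : ℝ) + 1) ^ k) := by
      exact_mod_cast hEc
    have h2 : (E₁.card : ℝ) ≤ E₂.card + 2 * F₂.card +
        2 * (H₁.card * ((m₁ : ℝ) + 1) ^ (4 * k)) := by exact_mod_cast hEc₁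
    have h3 : (H₁.card : ℝ) * ((m₁ : ℝ) + 1) ^ (4 * k) ≤ k * (2 * lam * (n * D)) := by
      calc (H₁.card : ℝ) * ((m₁ : ℝ) + 1) ^ (4 * k)
          ≤ (k * (2 * lam * (n * Q / R))) * (R * R) := by
            have : ((m₁ : ℝ) + 1) ^ (4 * k) = R * R := by
              rw [hR, ← pow_add]
              congr 1
              omega
            rw [this]
            gcongr
        _ = k * (2 * lam * (n * D)) := by
            rw [hD]
            field_simp
    push_cast at hFc₁ hFc₂
    have hkX : (k : ℝ) + 1 ≤ X := by exact_mod_cast (by omega : k + 1 ≤ X)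
    have hk1 : (1 : ℝ) ≤ k := by exact_mod_cast hk
    have hU : 0 ≤ lam * (n * D) := by positivity
    have h4 : (X + 1 : ℝ) * (4 * (k + 1) + 4 * (X + 1)) + 16 * k + 4 ≤ 32 * X ^ 2 := by nlinarith
    have h5 := mul_le_mul_of_nonneg_right h4 hU
    linarith

end Iteration

/-! ### Choice of parameters -/

/-- For `k ≤ log t` and `t` large, `64 * 2 ^ k + 1` is small enough for the late rounds. -/
lemma late_base_le {t : ℝ} {k : ℕ} (hkt : (k : ℝ) ≤ Real.log t)
    (ht : 1000 ≤ Real.log t) (ht0 : 0 < t) :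
    ((64 * 2 ^ k : ℝ) + 1) ^ (2 * k) ≤ Real.exp (t / (2 ^ (k + 1) - 1)) := by
  set L := Real.log t
  have htL : t = Real.exp L := (Real.exp_log ht0).symm
  have h2 : (2 : ℝ) = Real.exp (Real.log 2) := (Real.exp_log two_pos).symm
  have hl2 : Real.log 2 < 0.7 := by linarith [Real.log_two_lt_d9]
  have hl0 : 0 < Real.log 2 := Real.log_pos one_lt_two
  have hk0 : (0 : ℝ) ≤ k := Nat.cast_nonneg k
  have h1k : (1 : ℝ) ≤ 2 ^ k := one_le_pow₀ one_le_two
  have hpow : ((64 * 2 ^ k : ℝ) + 1) ^ (2 * k) ≤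
      Real.exp (((k + 7) * (2 * k) : ℝ) * Real.log 2) := by
    calc ((64 * 2 ^ k : ℝ) + 1) ^ (2 * k) ≤ ((2 : ℝ) ^ (k + 7)) ^ (2 * k) := by
          gcongr
          rw [pow_add]
          linarith
      _ = Real.exp (((k + 7) * (2 * k) : ℝ) * Real.log 2) := by
          rw [← pow_mul]
          nth_rewrite 1 [h2]
          rw [← Real.exp_nat_mul]
          push_cast
          rfl
  refine hpow.trans (Real.exp_le_exp.2 ?_)
  have h2k : (2 : ℝ) ^ k ≤ Real.exp (0.7 * L) := by
    nth_rewrite 1 [h2]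
    rw [← Real.exp_nat_mul]
    apply Real.exp_le_exp.2
    nlinarith
  have hM : (0 : ℝ) < 2 ^ (k + 1) - 1 := by rw [pow_succ]; linarith
  rw [le_div_iff₀ hM]
  -- a cubic lower bound for the exponential beats the quadratic factor once `L` is at least `1000`
  have hexp : 4 * (L + 7) ^ 2 ≤ Real.exp (0.3 * L) := by
    have h3 := Real.pow_div_factorial_le_exp (0.3 * L) (by linarith) 3
    refine le_trans ?_ h3
    norm_num [Nat.factorial]
    nlinarith [mul_nonneg (sub_nonneg.2 ht) (sq_nonneg L),
      mul_nonneg (sub_nonneg.2 ht) (by linarith : 0 ≤ L)]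
  calc ((k + 7) * (2 * k) : ℝ) * Real.log 2 * (2 ^ (k + 1) - 1)
      ≤ ((L + 7) * (2 * (L + 7))) * 1 * (2 * Real.exp (0.7 * L)) := by
        have : (2 : ℝ) ^ (k + 1) - 1 ≤ 2 * Real.exp (0.7 * L) := by
          rw [pow_succ]; linarith
        gcongr
        · linarith
        · linarith
    _ = 4 * (L + 7) ^ 2 * Real.exp (0.7 * L) := by ring
    _ ≤ Real.exp (0.3 * L) * Real.exp (0.7 * L) := by gcongr
    _ = t := by rw [← Real.exp_add, htL]; congr 1; ring

/-- The product of the stretches of all rounds. -/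
lemma stretch_le {ε : ℝ} {k m₁ m₂ : ℕ} (hε0 : 0 < ε) (hε1 : ε < 1) (hk : 1 ≤ k)
    (hm₁ : 40 * k / ε ≤ m₁) (hm₂a : (64 * 2 ^ k : ℝ) ≤ m₂) (hm₂b : 40 / ε ≤ m₂) :
    Real.exp (32 * 2 ^ (k + 1) / m₂) * (1 + 32 * k / m₁) * (1 + 8 * k / m₁) ≤
      1 + 13 * ε * 2 ^ k := by
  have hk1 : (1 : ℝ) ≤ k := by exact_mod_cast hk
  have h2k : (2 : ℝ) ≤ 2 ^ k := by
    simpa using pow_le_pow_right₀ (one_le_two (α := ℝ)) hk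
  have hm₁0 : (0 : ℝ) < m₁ := lt_of_lt_of_le (by positivity) hm₁
  have hm₂0 : (0 : ℝ) < m₂ := by linarith
  set y : ℝ := 32 * 2 ^ (k + 1) / m₂ with hy
  have hy0 : 0 ≤ y := by positivity
  have hy1 : y ≤ 1 := by
    rw [hy, div_le_one hm₂0, pow_succ]
    linarith
  have hyε : y ≤ 1.6 * ε * 2 ^ k := by
    rw [hy, div_le_iff₀ hm₂0]
    rw [div_le_iff₀ hε0] at hm₂b
    calc (32 * 2 ^ (k + 1) : ℝ) = 1.6 * 2 ^ k * 40 := by ring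
      _ ≤ 1.6 * 2 ^ k * (m₂ * ε) := by gcongr
      _ = _ := by ring
  have hexp : Real.exp y ≤ 1 + 2 * y := by
    have h := (abs_le.1 (Real.abs_exp_sub_one_sub_id_le (x := y) (by rwa [abs_of_nonneg hy0]))).2
    nlinarith
  have h40 : 40 * (k / m₁ : ℝ) ≤ ε := by
    rw [← mul_div_assoc, div_le_iff₀ hm₁0]
    rw [div_le_iff₀ hε0] at hm₁
    linarith
  have hkm0 : 0 ≤ (k / m₁ : ℝ) := by positivity
  calc Real.exp y * (1 + 32 * k / m₁) * (1 + 8 * k / m₁)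
      ≤ (1 + 2 * y) * (1 + ε) * (1 + ε) := by
        gcongr
        · rw [mul_div_assoc]; linarith
        · rw [mul_div_assoc]; linarith
    _ ≤ 1 + 2 * y + 9 * ε := by nlinarith [mul_nonneg hε0.le hy0]
    _ ≤ 1 + 13 * ε * 2 ^ k := by nlinarith

/-- The number of edges in terms of `n`, `Q = n ^ (1 / (2 ^ (k + 1) - 1))`, `t = log n` and the
base `B` of the hop bounds. -/
lemma size_le {ε n Q t p B : ℝ} {k : ℕ} (hB0 : 0 ≤ B) (hε0 : 0 < ε) (h2kt : (2 : ℝ) ^ k ≤ t)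
    (ht0 : 0 ≤ t) (hn0 : 0 ≤ n) (hQ0 : 0 ≤ Q) (hp : 0 ≤ p) (hB : B ≤ 42 * k / ε) (hk : 1 ≤ k) :
    32 * ((2 : ℝ) ^ (k + 1)) ^ 2 * (3 * t) * (n * (Q * B ^ (2 * k))) + 2 * (p * B ^ k) ≤
      n * Q * (84 * (k : ℝ) / ε) ^ (2 * k) * (384 * t ^ 3) + p * (84 * (k : ℝ) / ε) ^ k := by
  have h2k : (2 : ℝ) ≤ 2 ^ k := by
    simpa using pow_le_pow_right₀ (one_le_two (α := ℝ)) hk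
  refine add_le_add ?_ ?_
  · have hR : B ^ (2 * k) ≤ (84 * k / ε) ^ (2 * k) := by
      gcongr
      refine hB.trans ?_
      gcongr
      norm_num
    have hX : ((2 : ℝ) ^ (k + 1)) ^ 2 ≤ (2 * t) ^ 2 := by
      gcongr
      rw [pow_succ]
      linarith
    calc 32 * ((2 : ℝ) ^ (k + 1)) ^ 2 * (3 * t) * (n * (Q * B ^ (2 * k)))
        ≤ 32 * (2 * t) ^ 2 * (3 * t) * (n * (Q * (84 * k / ε) ^ (2 * k))) := by gcongr
      _ = _ := by ring
  · have h2 : (2 : ℝ) * B ^ k ≤ (84 * k / ε) ^ k := by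
      calc (2 : ℝ) * B ^ k ≤ 2 ^ k * (42 * k / ε) ^ k := by gcongr
        _ = (84 * k / ε) ^ k := by rw [← mul_pow]; congr 1; ring
    calc 2 * (p * B ^ k) = p * (2 * B ^ k) := by ring
      _ ≤ _ := by gcongr

/-- The conclusion for all `n` with `log log n` at least `1000`. -/
lemma preserver_of_large {n k : ℕ} {G : WDigraph (Fin n)} (hs : G.Symmetric) (hn : G.Nonneg)
    {ε : ℝ} (hε : ε ∈ Set.Ioo (0 : ℝ) 1) (hk : 1 ≤ k) (hkn : (k : ℝ) ≤ Real.log (Real.log n))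
    (hL : 1000 ≤ Real.log (Real.log n)) (P : Finset (Fin n × Fin n)) :
    ∃ E, Preserves G P (1 + 13 * ε * 2 ^ k) E ∧
      (E.card : ℝ) ≤ (n : ℝ) ^ (1 + 1 / (2 ^ (k + 1) - 1 : ℝ)) * (84 * (k : ℝ) / ε) ^ (2 * k) *
        (384 * Real.log n ^ 3) + (P.card : ℝ) * (84 * (k : ℝ) / ε) ^ k := by
  obtain ⟨hε0, hε1⟩ := hε
  set t := Real.log n with ht
  have ht0 : 0 < t := (Real.log_natCast_nonneg n).lt_of_ne' fun h => by
    rw [ht, h, Real.log_zero] at hL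
    norm_num at hL
  have ht1 : 1 ≤ t := by
    by_contra hlt
    have := Real.log_nonpos ht0.le (not_le.1 hlt).le
    linarith
  have hn0 : (0 : ℝ) < n := by
    rcases Nat.eq_zero_or_pos n with h | h
    · simp [ht, h] at ht0
    · exact_mod_cast h
  have hnt : (n : ℝ) = Real.exp t := (Real.exp_log hn0).symm
  have hk1 : (1 : ℝ) ≤ k := by exact_mod_cast hk
  have h2k : (2 : ℝ) ≤ 2 ^ k := by
    simpa using pow_le_pow_right₀ (one_le_two (α := ℝ)) hk
  have h2kt : (2 : ℝ) ^ k ≤ t := by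
    calc (2 : ℝ) ^ k ≤ Real.exp 1 ^ k := by
          gcongr
          linarith [Real.exp_one_gt_d9]
      _ = Real.exp k := by rw [← Real.exp_nat_mul, mul_one]
      _ ≤ Real.exp (Real.log t) := Real.exp_le_exp.2 hkn
      _ = t := Real.exp_log ht0
  set M : ℝ := 2 ^ (k + 1) - 1 with hM
  have hM0 : 0 < M := by rw [hM, pow_succ]; linarith
  set Q : ℝ := Real.exp (t / M) with hQ
  have hQ1 : 1 ≤ Q := Real.one_le_exp (by positivity)
  have hQn : Q ^ (2 ^ (k + 1) - 1) = n := by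
    rw [hQ, ← Real.exp_nat_mul, Nat.cast_sub Nat.one_le_two_pow, hnt]
    push_cast
    rw [← hM, mul_div_cancel₀ _ hM0.ne']
  have hnQ : (n : ℝ) ^ (1 + 1 / M) = n * Q := by
    rw [Real.rpow_add hn0, Real.rpow_one, Real.rpow_def_of_pos hn0, mul_one_div]
  set m₁ : ℕ := ⌈40 * k / ε⌉₊ with hm₁
  set m₂ : ℕ := max (64 * 2 ^ k) ⌈40 / ε⌉₊ with hm₂
  have hm₁l : 40 * k / ε ≤ m₁ := Nat.le_ceil _
  have hm₁k : (40 * k : ℝ) ≤ m₁ := by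
    refine le_trans ?_ hm₁l
    rw [le_div_iff₀ hε0]
    nlinarith
  have hkε : 1 ≤ k / ε := by
    rw [le_div_iff₀ hε0]
    linarith
  have hm₁u : (m₁ : ℝ) + 1 ≤ 42 * k / ε := by
    have h1 : (m₁ : ℝ) < 40 * k / ε + 1 := Nat.ceil_lt_add_one (by positivity)
    have h2 : 42 * k / ε = 40 * k / ε + 2 * (k / ε) := by ring
    linarith
  have hm₂a : (64 * 2 ^ k : ℝ) ≤ m₂ := by exact_mod_cast le_max_left _ _
  have hm₂b : 40 / ε ≤ m₂ := (Nat.le_ceil _).trans (by exact_mod_cast le_max_right _ _)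
  have hm₁0 : (0 : ℝ) < m₁ := by linarith
  have hm₂0 : (0 : ℝ) < m₂ := by linarith
  have hB : ((m₂ : ℝ) + 1) ^ (2 * k) ≤ Q * ((m₁ : ℝ) + 1) ^ (2 * k) := by
    have hR1 : 1 ≤ ((m₁ : ℝ) + 1) ^ (2 * k) := one_le_pow₀ (by linarith)
    rcases max_choice (64 * 2 ^ k) ⌈40 / ε⌉₊ with h | h
    · refine le_trans ?_ (le_mul_of_one_le_right (by positivity) hR1)
      rw [hm₂, h]
      push_cast
      exact late_base_le hkn hL ht0
    · refine le_trans ?_ (le_mul_of_one_le_left (by positivity) hQ1)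
      have : m₂ ≤ m₁ := by
        rw [hm₂, h]
        refine Nat.ceil_le_ceil ?_
        gcongr
        linarith
      gcongr
  obtain ⟨E, hE, hEc⟩ := exists_preserver (lam := 3 * t) (m₁ := m₁) (m₂ := m₂) hs hn
    (by rw [Fintype.card_fin]; linarith) hk rfl hQ1 (by rw [Fintype.card_fin]; exact hQn)
    (by exact_mod_cast hm₁k)
    ((by rw [pow_succ]; have := Nat.one_le_two_pow (n := k); omega :
      8 * (2 ^ (k + 1) + 1) ≤ 64 * 2 ^ k).trans (le_max_left _ _)) rfl hB P
  refine ⟨E, hE.mono ?_, ?_⟩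
  · push_cast
    exact stretch_le hε0 hε1 hk hm₁l hm₂a hm₂b
  · rw [Fintype.card_fin] at hEc
    push_cast at hEc
    rw [hnQ]
    exact hEc.trans (size_le (by positivity) hε0 h2kt ht0.le hn0.le (by positivity)
      (Nat.cast_nonneg _) hm₁u hk)

end Hopsets

open Hopsets in
/-- There are constants `c, c' ≥ 1` such that every `n`-vertex
undirected graph with nonnegative polynomially bounded weights, every `ε ∈ (0,1)`,
every integer `1 ≤ k ≤ log log n` and every set `P` of `p` pairs, admits a subgraph
`Ĝ ⊆ G` with at most `n^{1+1/(2^{k+1}−1)}·(c·k/ε)^{2k}·(log n)^{c'} + p·(c·k/ε)^k`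
edges that is a `(1+ε')`-distance preserver for `P`, where
`ε' ≤ c·ε·2^k·(log log n − k + 1)`. -/
theorem stmt_11 (q : ℕ) :
    ∃ c c' : ℝ, 1 ≤ c ∧ 1 ≤ c' ∧
      ∀ n : ℕ, ∀ G : WDigraph (Fin n), G.Symmetric → G.Nonneg → G.PolyBounded q →
      ∀ ε : ℝ, ε ∈ Set.Ioo (0 : ℝ) 1 →
      ∀ k : ℕ, 1 ≤ k → (k : ℝ) ≤ Real.log (Real.log n) →
      ∀ P : Finset (Fin n × Fin n),
        ∃ (ε' : ℝ) (Ehat : Finset (Fin n × Fin n)),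
          Ehat ⊆ G.edges ∧ (∀ e ∈ Ehat, (e.2, e.1) ∈ Ehat) ∧
          (Ehat.card : ℝ) ≤ (n : ℝ) ^ (1 + 1 / (2 ^ (k + 1) - 1 : ℝ))
              * (c * (k : ℝ) / ε) ^ (2 * k) * (Real.log n) ^ c'
              + (P.card : ℝ) * (c * (k : ℝ) / ε) ^ k ∧
          ε' ≤ c * ε * 2 ^ k * (Real.log (Real.log n) - (k : ℝ) + 1) ∧
          ∀ uv ∈ P,
            (G.sub Ehat).dist uv.1 uv.2 ≤ ENNReal.ofReal (1 + ε') * G.dist uv.1 uv.2 := by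
  refine ⟨84, 10 + 2 * Real.exp 1000, by norm_num, by linarith [Real.exp_pos 1000], ?_⟩
  intro n G hs hn _ ε hε k hk hkn P
  have hε0 := hε.1
  have hk1 : (1 : ℝ) ≤ k := by exact_mod_cast hk
  have hL1 : 1 ≤ Real.log (Real.log n) := hk1.trans hkn
  have ht0 : 0 < Real.log n := (Real.log_natCast_nonneg n).lt_of_ne' fun h => by
    rw [h, Real.log_zero] at hL1
    norm_num at hL1
  have hte : Real.exp 1 ≤ Real.log n := (Real.le_log_iff_exp_le ht0).1 hL1
  have ht1 : 1 ≤ Real.log n := by linarith [Real.exp_one_gt_d9]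
  have hn0 : (0 : ℝ) < n := by
    rcases Nat.eq_zero_or_pos n with h | h
    · simp [h] at ht0
    · exact_mod_cast h
  have hX : (0 : ℝ) < 84 * ε * 2 ^ k := by positivity
  have hfac : 84 * ε * 2 ^ k ≤ 84 * ε * 2 ^ k * (Real.log (Real.log n) - (k : ℝ) + 1) :=
    le_mul_of_one_le_right hX.le (by linarith)
  have hkε : 1 ≤ 84 * (k : ℝ) / ε := by
    rw [le_div_iff₀ hε0]
    linarith [hε.2]
  rcases le_total 1000 (Real.log (Real.log n)) with hL | hL
  · obtain ⟨E, hE, hEc⟩ := preserver_of_large hs hn hε hk hkn hL P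
    refine ⟨13 * ε * 2 ^ k, E, hE.1, hE.2.1, hEc.trans ?_, ?_, hE.2.2⟩
    · gcongr
      calc 384 * Real.log n ^ 3 ≤ Real.log n ^ 7 * Real.log n ^ 3 := by
            gcongr
            have h1 : (2.7 : ℝ) ≤ Real.log n := by linarith [Real.exp_one_gt_d9]
            calc (384 : ℝ) ≤ 2.7 ^ 7 := by norm_num
              _ ≤ Real.log n ^ 7 := by gcongr
        _ = Real.log n ^ (10 : ℝ) := by
            rw [← pow_add]
            norm_cast
        _ ≤ _ := Real.rpow_le_rpow_of_exponent_le ht1 (by linarith [Real.exp_pos 1000])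
    · have : 0 < ε * 2 ^ k := by positivity
      linarith
  · -- for bounded `n` the whole graph is small enough, as `(log n) ^ c' ≥ n ^ 2`
    refine ⟨0, G.edges, subset_rfl, fun e he => (hs e he).1, ?_, hX.le.trans hfac, ?_⟩
    · have htu : Real.log n ≤ Real.exp 1000 := (Real.log_le_iff_le_exp ht0).1 hL
      have hcard : (G.edges.card : ℝ) ≤ (n : ℝ) ^ 2 := by
        have := Finset.card_le_univ G.edges
        rw [Fintype.card_prod, Fintype.card_fin, ← sq] at this
        exact_mod_cast this
      have hpow : (n : ℝ) ^ 2 ≤ Real.log n ^ (10 + 2 * Real.exp 1000) := by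
        calc (n : ℝ) ^ 2 = Real.exp (2 * Real.log n) := by
              rw [two_mul, Real.exp_add, Real.exp_log hn0, sq]
          _ ≤ Real.exp (1 * (10 + 2 * Real.exp 1000)) := Real.exp_le_exp.2 (by linarith)
          _ = Real.exp 1 ^ (10 + 2 * Real.exp 1000) := Real.exp_mul _ _
          _ ≤ _ := Real.rpow_le_rpow (Real.exp_pos 1).le hte (by positivity)
      have hone : 1 ≤ (n : ℝ) ^ (1 + 1 / (2 ^ (k + 1) - 1 : ℝ)) := by
        have h1n : (1 : ℝ) ≤ n := by exact_mod_cast (Nat.cast_pos.1 hn0 : 0 < n)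
        have h1k : (1 : ℝ) ≤ 2 ^ (k + 1) := one_le_pow₀ one_le_two
        refine Real.one_le_rpow h1n (add_nonneg zero_le_one (one_div_nonneg.2 (by linarith)))
      have hfac1 := one_le_mul_of_one_le_of_one_le hone (one_le_pow₀ hkε (n := 2 * k))
      refine (hcard.trans hpow).trans
        ((le_mul_of_one_le_left (by positivity) hfac1).trans (le_add_of_nonneg_right ?_))
      have : 0 < 84 * (k : ℝ) / ε := by linarith
      positivity
    · intro uv _
      rw [add_zero, ENNReal.ofReal_one, one_mul]
      exact le_rfl
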